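/- arXiv:0903.4785 — 2 statements merged into one kernel-verified Lean document; each statement's English description precedes it below -/
import Mathlib

section
/- Let N ≥ 1, let w ≥ 2 be even, let n be an integer with 0 < n < w, set ñ = w − n, let D > 1 with N ∣ D, and let h be an integer with gcd(h,D) = 1. Let a be an integer with a·h ≡ −1 (mod D). Define S_{4,h}(z) = 2·Σ_{k ∈ ℤ} 1/(((a+kD)z − 1/D)^{ñ+1}·(Dz)^{n+1}) for z in the upper half-plane, and F_{4,h}(X) = ∫₀^{i∞} S_{4,h}(z)(X−z)^w dz + (−1)^{n−1}·∫₀^{i∞} S_{4,−h}(z)(X+z)^w dz. Then for every nonzero complex number X: F_{4,h}(X) = c_n·(2i)^{w+1}·D^{w}·X^{w}·B_{n+1}({a/D} − 1/(D²X))/(n+1), where c_n = (−1)^n·4πi·(2i)^{−w−1}·C(w,n). -/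
open MeasureTheory Complex Real

noncomputable section

/-- The contour integral `∫₀^{i∞} F(z) dz` along the positive imaginary axis `z = iy`. -/
def intI (F : ℂ → ℂ) : ℂ := Complex.I * ∫ y in Set.Ioi (0 : ℝ), F (Complex.I * y)

/-- The constant `c_n = (−1)^n·4πi·(2i)^{−w−1}·C(w,n)`. -/
def cconst (w n : ℕ) : ℂ :=
  (-1) ^ n * 4 * Real.pi * Complex.I * (2 * Complex.I) ^ (-(w : ℤ) - 1) * (w.choose n)

/-- The `k`-th Bernoulli polynomial evaluated at a complex number. -/
def bpoly (k : ℕ) (x : ℂ) : ℂ := Polynomial.aeval x (Polynomial.bernoulli k)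

/-- `S_{4,h}(z) = 2 Σ_{k ∈ ℤ} 1/(((a+kD)z − 1/D)^{ñ+1}(Dz)^{n+1})`, where `ah ≡ −1 (mod D)`.
(Replacing `a` by `−a` gives `S_{4,−h}`.) -/
def S4 (D w n : ℕ) (a : ℤ) (z : ℂ) : ℂ :=
  2 * ∑' k : ℤ, 1 / ((((a : ℂ) + k * D) * z - 1 / D) ^ (w - n + 1) *
      ((D : ℂ) * z) ^ (n + 1))

/-- The Eisenstein-type lattice sum `∑_{k ∈ ℤ} (τ + k)^{-m}`. -/
def latticeSum (m : ℕ) (τ : ℂ) : ℂ := ∑' k : ℤ, 1 / (τ + k) ^ m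

/-- A majorant for the terms of `latticeSum` on the strip `δ ≤ re τ ≤ 1 - δ`. -/
def latticeBound (δ : ℝ) (m : ℕ) (k : ℤ) : ℝ := ((δ * max 1 |(k : ℝ)|) ^ m)⁻¹

theorem summable_latticeBound {δ : ℝ} (hδ : 0 < δ) {m : ℕ} (hm : 2 ≤ m) :
    Summable (latticeBound δ m) := by
  have h1 : Summable fun k : ℤ => 1 / |(k : ℝ)| ^ m := by
    have := (Real.summable_one_div_int_pow (p := m)).2 (by omega)
    simpa [abs_div, abs_pow] using this.abs
  have h2 : Summable fun k : ℤ => (if k = 0 then (1 : ℝ) else 0) :=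
    summable_of_hasFiniteSupport (Set.Finite.subset (Set.finite_singleton (0 : ℤ))
      (by intro k hk; by_contra h; simp_all))
  refine Summable.of_nonneg_of_le (fun k => ?_) (fun k => ?_) ((h1.add h2).mul_left ((δ ^ m)⁻¹))
  · unfold latticeBound; positivity
  · unfold latticeBound
    rw [mul_pow, mul_inv]
    refine mul_le_mul_of_nonneg_left ?_ (by positivity)
    by_cases hk : k = 0
    · simp [hk, show m ≠ 0 by omega]
    · have : (1 : ℝ) ≤ |(k : ℝ)| := by exact_mod_cast Int.one_le_abs hk
      simp [hk, max_eq_right this]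

theorem le_norm_add_int {δ : ℝ} (hδ : 0 < δ) {τ : ℂ} (h1 : δ ≤ τ.re) (h2 : τ.re ≤ 1 - δ)
    (k : ℤ) : δ * max 1 |(k : ℝ)| ≤ ‖τ + k‖ := by
  refine le_trans ?_ (Complex.abs_re_le_norm _)
  simp only [add_re, intCast_re]
  rcases lt_trichotomy k 0 with hk | hk | hk
  · have hk' : (k : ℝ) ≤ -1 := by exact_mod_cast (by omega : k ≤ -1)
    rw [abs_of_neg (by linarith : (k : ℝ) < 0), max_eq_right (by linarith),
      abs_of_nonpos (by linarith)]
    nlinarith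
  · subst hk
    simpa using h1.trans (le_abs_self _)
  · have hk' : (1 : ℝ) ≤ k := by exact_mod_cast (by omega : 1 ≤ k)
    rw [abs_of_pos (by linarith : (0 : ℝ) < k), max_eq_right (by linarith),
      abs_of_nonneg (by linarith)]
    nlinarith

theorem norm_term_le_latticeBound {δ : ℝ} (hδ : 0 < δ) {τ : ℂ} (h1 : δ ≤ τ.re)
    (h2 : τ.re ≤ 1 - δ) (m : ℕ) (k : ℤ) : ‖1 / (τ + k) ^ m‖ ≤ latticeBound δ m k := by
  rw [norm_div, norm_one, norm_pow, one_div, latticeBound]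
  have := le_norm_add_int hδ h1 h2 k
  gcongr

theorem add_int_ne_zero {τ : ℂ} (h0 : 0 < τ.re) (h1 : τ.re < 1) (k : ℤ) : τ + k ≠ 0 := by
  intro h
  have := congrArg re h
  simp only [add_re, intCast_re, zero_re] at this
  have a : (-1 : ℝ) < k := by linarith
  have b : (k : ℝ) < 0 := by linarith
  have a' : -1 < k := by exact_mod_cast a
  have b' : k < 0 := by exact_mod_cast b
  omega

theorem norm_latticeSum_le {δ : ℝ} (hδ : 0 < δ) {τ : ℂ} (h1 : δ ≤ τ.re)
    (h2 : τ.re ≤ 1 - δ) {m : ℕ} (hm : 2 ≤ m) :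
    ‖latticeSum m τ‖ ≤ ∑' k, latticeBound δ m k :=
  tsum_of_norm_bounded (summable_latticeBound hδ hm).hasSum
    (norm_term_le_latticeBound hδ h1 h2 m)

theorem hasDerivAt_latticeSum {m : ℕ} (hm : 2 ≤ m) {τ : ℂ} (h0 : 0 < τ.re) (h1 : τ.re < 1) :
    HasDerivAt (latticeSum m) (-m * latticeSum (m + 1) τ) τ := by
  obtain ⟨δ, hδ, hδ1, hδ2⟩ : ∃ δ : ℝ, 0 < δ ∧ δ < τ.re ∧ τ.re < 1 - δ :=
    ⟨min τ.re (1 - τ.re) / 2, by have := sub_pos.2 h1; positivity,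
      by have := min_le_left τ.re (1 - τ.re); linarith,
      by have := min_le_right τ.re (1 - τ.re); linarith⟩
  let t : Set ℂ := {z | δ < z.re} ∩ {z | z.re < 1 - δ}
  have ht : IsOpen t :=
    (isOpen_lt continuous_const continuous_re).inter (isOpen_lt continuous_re continuous_const)
  have hc : IsPreconnected t :=
    ((convex_halfSpace_re_gt δ).inter (convex_halfSpace_re_lt (1 - δ))).isPreconnected
  have hτ : τ ∈ t := ⟨hδ1, hδ2⟩
  have key := hasDerivAt_tsum_of_isPreconnected
    (g := fun (k : ℤ) (z : ℂ) => 1 / (z + k) ^ m)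
    (g' := fun (k : ℤ) (z : ℂ) => -m * (1 / (z + k) ^ (m + 1)))
    (u := fun k => m * latticeBound δ (m + 1) k) (t := t) (y := τ) (y₀ := τ)
    ((summable_latticeBound hδ (by omega)).mul_left _) ht hc ?_ ?_ hτ ?_ hτ
  · rw [tsum_mul_left] at key
    exact key
  · intro k z hz
    have hne : z + k ≠ 0 := add_int_ne_zero (hδ.trans hz.1) (by linarith [hz.2.out]) k
    have hd := (((hasDerivAt_id z).add_const (k : ℂ)).pow m).inv (pow_ne_zero m hne)
    simp only [one_div]
    refine hd.congr_deriv ?_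
    obtain ⟨p, rfl⟩ : ∃ p, m = p + 1 := ⟨m - 1, by omega⟩
    simp only [id, Nat.add_sub_cancel]
    have hne' : (z + k) ^ p ≠ 0 := pow_ne_zero _ hne
    simp only [Pi.pow_apply]
    field_simp
    ring
  · intro k z hz
    rw [norm_mul, norm_neg, Complex.norm_natCast]
    gcongr
    exact norm_term_le_latticeBound hδ hz.1.le hz.2.le _ _
  · exact Summable.of_norm_bounded (summable_latticeBound hδ hm)
      (norm_term_le_latticeBound hδ hδ1.le hδ2.le m)

theorem latticeSum_neg (m : ℕ) (τ : ℂ) : latticeSum m (-τ) = (-1) ^ m * latticeSum m τ := by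
  unfold latticeSum
  rw [← (Equiv.neg ℤ).tsum_eq, ← tsum_mul_left]
  refine tsum_congr fun k => ?_
  rw [show -τ + (((Equiv.neg ℤ) k : ℤ) : ℂ) = (-1) * (τ + k) by simp; ring, mul_pow, one_div,
    one_div, mul_inv, ← inv_pow]
  norm_num

theorem latticeSum_add_int (m : ℕ) (τ : ℂ) (n : ℤ) :
    latticeSum m (τ + n) = latticeSum m τ := by
  unfold latticeSum
  rw [← (Equiv.addLeft n).tsum_eq (fun k : ℤ => 1 / (τ + k) ^ m)]
  refine tsum_congr fun k => ?_
  simp [add_assoc]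

theorem latticeSum_eq_tsum_exp {m : ℕ} (hm : 1 ≤ m) {τ : ℂ} (hτ : 0 < τ.im) :
    latticeSum (m + 1) τ = ((-2 * π * I) ^ (m + 1) / (m.factorial : ℂ)) *
      ∑' j : ℕ, (j : ℂ) ^ m * cexp (2 * π * I * τ) ^ j :=
  EisensteinSeries.qExpansion_identity hm ⟨τ, hτ⟩

theorem norm_cexp_two_pi (τ : ℂ) : ‖cexp (2 * π * I * τ)‖ = rexp (-(2 * π * τ.im)) := by
  rw [Complex.norm_exp]
  simp

theorem exists_norm_latticeSum_le_of_one_le_im {m : ℕ} (hm : 2 ≤ m) :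
    ∃ C : ℝ, 0 ≤ C ∧ ∀ τ : ℂ, 1 ≤ τ.im → ‖latticeSum m τ‖ ≤ C * rexp (-τ.im) := by
  obtain ⟨m, rfl⟩ : ∃ p, m = p + 1 := ⟨m - 1, by omega⟩
  let K : ℝ := ‖((-2 * π * I : ℂ) ^ (m + 1) / (m.factorial : ℂ))‖
  have hs : Summable fun j : ℕ => (j : ℝ) ^ m * rexp (-1) ^ j :=
    summable_pow_mul_geometric_of_norm_lt_one m
      (by rw [Real.norm_of_nonneg (Real.exp_pos _).le]; simp)
  let S : ℝ := ∑' j : ℕ, (j : ℝ) ^ m * rexp (-1) ^ j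
  have hS : 0 ≤ S := tsum_nonneg fun j => by positivity
  refine ⟨K * S, by positivity, fun τ hτ => ?_⟩
  rw [latticeSum_eq_tsum_exp (by omega) (by linarith), norm_mul, mul_assoc K]
  refine mul_le_mul_of_nonneg_left ?_ (norm_nonneg _)
  refine tsum_of_norm_bounded (hs.hasSum.mul_right _) fun j => ?_
  rcases Nat.eq_zero_or_pos j with rfl | hj
  · simp [show m ≠ 0 by omega]
  · rw [norm_mul, norm_pow, norm_pow, norm_cexp_two_pi, Complex.norm_natCast, mul_assoc ((j : ℝ) ^ m)]
    refine mul_le_mul_of_nonneg_left ?_ (by positivity)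
    rw [← Real.exp_nat_mul, ← Real.exp_nat_mul, ← Real.exp_add]
    refine Real.exp_le_exp.2 ?_
    have hj' : (1 : ℝ) ≤ j := by exact_mod_cast hj
    have h1 : 2 * τ.im ≤ 2 * π * τ.im := by nlinarith [Real.pi_gt_three]
    nlinarith

theorem exists_norm_latticeSum_le {δ : ℝ} (hδ : 0 < δ) {m : ℕ} (hm : 2 ≤ m) :
    ∃ C : ℝ, 0 ≤ C ∧ ∀ τ : ℂ, δ ≤ τ.re → τ.re ≤ 1 - δ →
      ‖latticeSum m τ‖ ≤ C * rexp (-|τ.im|) := by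
  obtain ⟨C, hC, hCb⟩ := exists_norm_latticeSum_le_of_one_le_im hm
  let B : ℝ := ∑' k, latticeBound δ m k
  have hB : 0 ≤ B := tsum_nonneg fun k => by unfold latticeBound; positivity
  refine ⟨C + B * rexp 1, by positivity, fun τ h1 h2 => ?_⟩
  have hE : 0 < rexp (-|τ.im|) := Real.exp_pos _
  have hBE : 0 ≤ B * rexp 1 * rexp (-|τ.im|) := by positivity
  have hCE : 0 ≤ C * rexp (-|τ.im|) := by positivity
  rw [add_mul]
  by_cases hlarge : 1 ≤ |τ.im|
  · refine le_trans ?_ (le_add_of_nonneg_right hBE)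
    rcases le_abs.1 hlarge with h | h
    · rw [abs_of_pos (by linarith)]
      exact hCb τ h
    · have := hCb (-τ) (by simpa using h)
      rw [latticeSum_neg, norm_mul, norm_pow, norm_neg, norm_one, one_pow, one_mul] at this
      rw [abs_of_neg (by linarith)]
      simpa using this
  · refine (norm_latticeSum_le hδ h1 h2 hm).trans ((le_trans ?_) (le_add_of_nonneg_left hCE))
    rw [mul_assoc, ← Real.exp_add]
    exact le_mul_of_one_le_right hB (Real.one_le_exp (by linarith))

/-- The moments of `latticeSum` along the vertical line `re τ = c`. -/
def lineMoment (m s : ℕ) (c : ℝ) : ℂ :=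
  ∫ y : ℝ, latticeSum m (c + y * I) * (y * I) ^ s

theorem integrable_abs_pow_mul_exp_neg_abs (s : ℕ) :
    Integrable fun y : ℝ => |y| ^ s * rexp (-|y|) := by
  have h : IntegrableOn (fun y : ℝ => |y| ^ s * rexp (-|y|)) (Set.Ioi 0) := by
    have := Real.GammaIntegral_convergent (s := s + 1) (by positivity)
    refine this.congr_fun (fun y hy => ?_) measurableSet_Ioi
    have hy' : (0 : ℝ) < y := hy
    simp [abs_of_pos hy', mul_comm]
  have h' : IntegrableOn (fun y : ℝ => |y| ^ s * rexp (-|y|)) (Set.Iic 0) := by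
    rw [← integrableOn_Ici_iff_integrableOn_Ioi] at h
    have := h.comp_neg
    simpa using this
  rw [← integrableOn_univ, ← Set.Iic_union_Ioi (a := (0 : ℝ))]
  exact h'.union h

theorem hasDerivAt_latticeSum_vertical {m : ℕ} (hm : 2 ≤ m) {c : ℝ} (h0 : 0 < c) (h1 : c < 1)
    (y : ℝ) : HasDerivAt (fun y : ℝ => latticeSum m (c + y * I))
      (-m * latticeSum (m + 1) (c + y * I) * I) y := by
  have hd : HasDerivAt (fun y : ℝ => (c + y * I : ℂ)) I y := by
    simpa using ((hasDerivAt_id y).ofReal_comp.mul_const I).const_add (c : ℂ)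
  exact (hasDerivAt_latticeSum (τ := c + y * I) hm (by simpa) (by simpa)).comp y hd

theorem hasDerivAt_latticeSum_horizontal {m : ℕ} (hm : 2 ≤ m) {c : ℝ} (h0 : 0 < c) (h1 : c < 1)
    (y : ℝ) : HasDerivAt (fun c : ℝ => latticeSum m (c + y * I))
      (-m * latticeSum (m + 1) (c + y * I)) c := by
  have hd : HasDerivAt (fun c : ℝ => (c + y * I : ℂ)) 1 c := by
    simpa using (hasDerivAt_id c).ofReal_comp.add_const (y * I : ℂ)
  have := (hasDerivAt_latticeSum (τ := c + y * I) hm (by simpa) (by simpa)).comp c hd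
  rwa [mul_one] at this

theorem continuous_latticeSum_vertical {m : ℕ} (hm : 2 ≤ m) {c : ℝ} (h0 : 0 < c) (h1 : c < 1) :
    Continuous fun y : ℝ => latticeSum m (c + y * I) :=
  continuous_iff_continuousAt.2 fun y => (hasDerivAt_latticeSum_vertical hm h0 h1 y).continuousAt

theorem exists_norm_moment_integrand_le {δ : ℝ} (hδ : 0 < δ) {m : ℕ} (hm : 2 ≤ m) (s : ℕ) :
    ∃ C : ℝ, ∀ c y : ℝ, δ ≤ c → c ≤ 1 - δ →
      ‖latticeSum m (c + y * I) * (y * I) ^ s‖ ≤ C * (|y| ^ s * rexp (-|y|)) := by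
  obtain ⟨C, -, hC⟩ := exists_norm_latticeSum_le hδ hm
  refine ⟨C, fun c y h1 h2 => ?_⟩
  have := hC (c + y * I) (by simpa) (by simpa)
  simp only [add_im, ofReal_im, mul_im, ofReal_re, I_im, I_re, mul_one, mul_zero, add_zero,
    zero_add] at this
  rw [norm_mul, norm_pow, norm_mul, norm_I, mul_one, norm_real, Real.norm_eq_abs,
    mul_comm (|y| ^ s), ← mul_assoc]
  gcongr

theorem integrable_moment_integrand {m : ℕ} (hm : 2 ≤ m) (s : ℕ) {c : ℝ} (h0 : 0 < c)
    (h1 : c < 1) : Integrable fun y : ℝ => latticeSum m (c + y * I) * (y * I) ^ s := by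
  have hδ : 0 < min c (1 - c) := lt_min h0 (sub_pos.2 h1)
  obtain ⟨C, hC⟩ := exists_norm_moment_integrand_le hδ hm s
  refine ((integrable_abs_pow_mul_exp_neg_abs s).const_mul C).mono' ?_
    (Filter.Eventually.of_forall fun y => hC c y (min_le_left _ _) ?_)
  · have := continuous_latticeSum_vertical hm h0 h1
    exact Continuous.aestronglyMeasurable (by fun_prop)
  · linarith [min_le_right c (1 - c)]

theorem hasDerivAt_lineMoment {m : ℕ} (hm : 2 ≤ m) (s : ℕ) {c : ℝ} (h0 : 0 < c) (h1 : c < 1) :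
    HasDerivAt (lineMoment m s) (-m * lineMoment (m + 1) s c) c := by
  obtain ⟨δ, hδ, hδ1, hδ2⟩ : ∃ δ : ℝ, 0 < δ ∧ δ < c ∧ c < 1 - δ :=
    ⟨min c (1 - c) / 2, by have := sub_pos.2 h1; positivity,
      by have := min_le_left c (1 - c); linarith,
      by have := min_le_right c (1 - c); linarith⟩
  obtain ⟨C, hC⟩ := exists_norm_moment_integrand_le hδ (m := m + 1) (by omega) s
  have hs : Set.Ioo δ (1 - δ) ∈ nhds c := Ioo_mem_nhds hδ1 hδ2
  have key := hasDerivAt_integral_of_dominated_loc_of_deriv_le (μ := volume)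
    (F := fun (c y : ℝ) => latticeSum m (c + y * I) * (y * I) ^ s)
    (F' := fun (c y : ℝ) => -m * (latticeSum (m + 1) (c + y * I) * (y * I) ^ s))
    (bound := fun y => m * (C * (|y| ^ s * rexp (-|y|)))) hs ?_
    (integrable_moment_integrand hm s h0 h1) ?_ ?_ ?_ ?_
  · have := key.2
    rw [integral_const_mul] at this
    exact this
  · filter_upwards [hs] with x hx
    exact (integrable_moment_integrand hm s (hδ.trans hx.1) (by linarith [hx.2])).1
  · exact ((integrable_moment_integrand (by omega) s h0 h1).const_mul _).1
  · refine Filter.Eventually.of_forall fun y x hx => ?_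
    rw [norm_mul, norm_neg, Complex.norm_natCast]
    gcongr
    exact hC x y hx.1.le hx.2.le
  · exact ((integrable_abs_pow_mul_exp_neg_abs s).const_mul C).const_mul _
  · refine Filter.Eventually.of_forall fun y x hx => ?_
    rw [← mul_assoc]
    exact (hasDerivAt_latticeSum_horizontal hm (hδ.trans hx.1) (by linarith [hx.2]) y).mul_const _

theorem lineMoment_succ_succ {m : ℕ} (hm : 2 ≤ m) (s : ℕ) {c : ℝ} (h0 : 0 < c) (h1 : c < 1) :
    m * lineMoment (m + 1) (s + 1) c = (s + 1) * lineMoment m s c := by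
  have hi1 := integrable_moment_integrand (m := m + 1) (by omega) (s + 1) h0 h1
  have hi2 := integrable_moment_integrand hm s h0 h1
  have key := integral_eq_zero_of_hasDerivAt_of_integrable
    (f := fun y : ℝ => latticeSum m (c + y * I) * (y * I) ^ (s + 1))
    (f' := fun y : ℝ => -m * I * (latticeSum (m + 1) (c + y * I) * (y * I) ^ (s + 1)) +
      (s + 1) * I * (latticeSum m (c + y * I) * (y * I) ^ s)) ?_
    ((hi1.const_mul _).add (hi2.const_mul _)) (integrable_moment_integrand hm (s + 1) h0 h1)
  · rw [integral_add (hi1.const_mul _) (hi2.const_mul _), integral_const_mul,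
      integral_const_mul] at key
    change -m * I * lineMoment (m + 1) (s + 1) c + (s + 1) * I * lineMoment m s c = 0 at key
    refine mul_right_cancel₀ I_ne_zero ?_
    linear_combination -key
  · intro y
    have hd : HasDerivAt (fun y : ℝ => (y * I : ℂ)) I y := by
      simpa using (hasDerivAt_id y).ofReal_comp.mul_const I
    refine ((hasDerivAt_latticeSum_vertical hm h0 h1 y).mul (hd.pow (s + 1))).congr_deriv ?_
    simp only [Nat.add_sub_cancel, Pi.pow_apply]
    push_cast
    ring

theorem integral_eq_Ioi_add_Ioi_neg {f : ℝ → ℂ} (hf : Integrable f) :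
    ∫ y, f y = (∫ y in Set.Ioi 0, f y) + ∫ y in Set.Ioi 0, f (-y) := by
  rw [integral_comp_neg_Ioi, neg_zero, add_comm,
    intervalIntegral.integral_Iic_add_Ioi hf.integrableOn hf.integrableOn]

theorem hasSum_latticeSum_two (c : ℝ) {t : ℝ} (ht : 0 < t) :
    HasSum (fun j : ℕ => (2 * π * I) ^ 2 * (j * fourier j (c : UnitAddCircle)) *
      rexp (-(2 * π * j) * t)) (latticeSum 2 (c + t * I)) := by
  have him : (c + t * I : ℂ).im = t := by simp
  have hq : ‖cexp (2 * π * I * (c + t * I))‖ < 1 := by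
    rw [norm_cexp_two_pi, him]
    exact Real.exp_lt_one_iff.2 (by have := Real.pi_pos; nlinarith [mul_pos this ht])
  have hs := (summable_pow_mul_geometric_of_norm_lt_one 1 hq).hasSum
  have h := latticeSum_eq_tsum_exp (m := 1) le_rfl (τ := c + t * I) (by rw [him]; exact ht)
  rw [h]
  convert! hs.mul_left _ using 2 with j
  rw [fourier_coe_apply, ofReal_exp, ← Complex.exp_nat_mul, Nat.factorial_one,
    mul_assoc _ ((j : ℂ) * _), mul_assoc (j : ℂ), ← Complex.exp_add]
  have : (2 * π * I * (j : ℤ) * c / (1 : ℝ) + ((-(2 * π * j) * t : ℝ) : ℂ)) =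
      j * (2 * π * I * (c + t * I)) := by
    push_cast
    linear_combination (-2 * π * j * t : ℂ) * I_sq
  rw [this]
  push_cast
  ring

theorem lineMoment_two {s : ℕ} (hs : 2 ≤ s) {c : ℝ} (h0 : 0 < c) (h1 : c < 1) :
    lineMoment 2 s c = 2 * π * (-1) ^ s * bernoulliFun s c := by
  let a : ℕ → ℂ := fun j => (2 * π * I) ^ 2 *
    (j * (fourier j (c : UnitAddCircle) + (-1) ^ s * fourier (-j) (c : UnitAddCircle)))
  let F : ℝ → ℂ := fun t => latticeSum 2 (c + t * I) + (-1) ^ s * latticeSum 2 (c - t * I)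
  have hF : ∀ t ∈ Set.Ioi (0 : ℝ), HasSum (fun j => a j * rexp (-(2 * π * j) * t)) (F t) := by
    intro t ht
    have h2 := (hasSum_latticeSum_two (-c) ht).mul_left ((-1 : ℂ) ^ s)
    have hneg : latticeSum 2 ((-c : ℝ) + t * I) = latticeSum 2 (c - t * I) := by
      rw [show (((-c : ℝ) : ℂ) + t * I) = -(c - t * I) by push_cast; ring, latticeSum_neg]
      norm_num
    rw [hneg] at h2
    convert! (hasSum_latticeSum_two c ht).add h2 using 2 with j
    have : fourier (j : ℤ) ((-c : ℝ) : UnitAddCircle) = fourier (-j : ℤ) (c : UnitAddCircle) := by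
      rw [fourier_coe_apply, fourier_coe_apply]
      push_cast
      congr 1
      ring
    rw [this]
    simp only [a]
    ring
  have hpi := Real.pi_pos
  have hre : ((s + 1 : ℂ)).re = ((s + 1 : ℕ) : ℝ) := by simp
  have hsum : Summable fun j : ℕ => ‖a j‖ / (2 * π * j) ^ ((s + 1 : ℂ)).re := by
    have h1 : Summable fun j : ℕ => 1 / (j : ℝ) ^ s := Real.summable_one_div_nat_pow.2 (by omega)
    refine Summable.of_nonneg_of_le (fun j => by positivity) (fun j => ?_)
      (h1.mul_left ((2 * π) ^ 2 * 2 / (2 * π) ^ (s + 1)))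
    rw [hre, Real.rpow_natCast]
    rcases Nat.eq_zero_or_pos j with rfl | hj
    · simp only [a, CharP.cast_eq_zero, zero_mul, mul_zero, norm_zero, zero_div]
      positivity
    · have hj' : (0 : ℝ) < j := by exact_mod_cast hj
      have hf : ‖(fourier j (c : UnitAddCircle) : ℂ) +
          (-1) ^ s * fourier (-j) (c : UnitAddCircle)‖ ≤ 2 := by
        refine (norm_add_le _ _).trans ?_
        rw [norm_mul, norm_pow, norm_neg, norm_one, one_pow, one_mul, fourier_apply, fourier_apply,
          Circle.norm_coe, Circle.norm_coe]
        norm_num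
      have ha : ‖a j‖ ≤ (2 * π) ^ 2 * (j * 2) := by
        simp only [a]
        rw [norm_mul, norm_mul, norm_pow, norm_mul, norm_mul, norm_I, mul_one, norm_real,
          Real.norm_of_nonneg hpi.le, Complex.norm_natCast, Complex.norm_ofNat]
        gcongr
      calc ‖a j‖ / (2 * π * j) ^ (s + 1) ≤ (2 * π) ^ 2 * (j * 2) / (2 * π * j) ^ (s + 1) := by
            gcongr
        _ = _ := by
            rw [mul_pow (2 * π) (j : ℝ)]
            field_simp
            ring
  have hm := hasSum_mellin (a := a) (p := fun j => 2 * π * j) (F := F) (s := s + 1) (fun j => ?_)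
    (by rw [hre]; positivity) hF hsum
  · have hb := (hasSum_one_div_nat_pow_mul_fourier hs ⟨h0.le, h1.le⟩).mul_left
      ((s.factorial : ℂ) * (2 * π * I) ^ 2 / (2 * π) ^ (s + 1))
    have hmel : mellin F (s + 1) = (s.factorial : ℂ) * (2 * π * I) ^ 2 / (2 * π) ^ (s + 1) *
        (-(2 * π * I) ^ s / (s.factorial : ℂ) * bernoulliFun s c) := by
      refine hm.unique ?_
      convert! hb using 2 with j
      rw [Complex.Gamma_nat_eq_factorial, ← Nat.cast_add_one, Complex.cpow_natCast]
      rcases Nat.eq_zero_or_pos j with rfl | hj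
      · simp [a, show s ≠ 0 by omega]
      · have hj' : (j : ℂ) ≠ 0 := by exact_mod_cast hj.ne'
        have hpi' : (π : ℂ) ≠ 0 := by exact_mod_cast hpi.ne'
        simp only [a]
        push_cast
        rw [mul_pow (2 * π : ℂ) (j : ℂ)]
        field_simp
        ring
    have hmom : lineMoment 2 s c = I ^ s * mellin F (s + 1) := by
      have hi := integrable_moment_integrand (m := 2) le_rfl s h0 h1
      have hin : Integrable fun y : ℝ =>
          latticeSum 2 (c + (-y : ℝ) * I) * ((-y : ℝ) * I) ^ s := hi.comp_neg
      rw [lineMoment, integral_eq_Ioi_add_Ioi_neg hi,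
        ← integral_add hi.integrableOn hin.integrableOn, mellin, ← integral_const_mul]
      refine setIntegral_congr_fun measurableSet_Ioi fun t _ => ?_
      simp only [F, add_sub_cancel_right, Complex.cpow_natCast, smul_eq_mul]
      rw [mul_pow, mul_pow, ofReal_neg, neg_pow, neg_mul, ← sub_eq_add_neg]
      ring
    rw [hmom, hmel]
    have hpi' : (π : ℂ) ≠ 0 := by exact_mod_cast hpi.ne'
    have hfac : (s.factorial : ℂ) ≠ 0 := by exact_mod_cast s.factorial_ne_zero
    have hI : (I : ℂ) ^ s * I ^ s = (-1) ^ s := by rw [← mul_pow, I_mul_I]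
    rw [← hI]
    have hI2 := I_sq
    field_simp
    simp only [I_sq]
    ring
  · rcases Nat.eq_zero_or_pos j with rfl | hj
    · left; simp [a]
    · right; positivity

theorem lineMoment_eq_of_two_le (p : ℕ) {s : ℕ} (hs : 2 ≤ s) {c : ℝ} (h0 : 0 < c) (h1 : c < 1) :
    lineMoment (p + 2) s c = 2 * π * (-1) ^ (s + p) / ((p + 1).factorial : ℂ) *
      s.descFactorial p * bernoulliFun (s - p) c := by
  induction p generalizing c with
  | zero => simp [lineMoment_two hs h0 h1]
  | succ p ih =>
    have hd := hasDerivAt_lineMoment (m := p + 2) (by omega) s h0 h1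
    have hd' := ((hasDerivAt_bernoulliFun (s - p) c).ofReal_comp).const_mul
      (2 * π * (-1) ^ (s + p) / ((p + 1).factorial : ℂ) * s.descFactorial p)
    have heq := hd.unique (hd'.congr_of_eventuallyEq (by
      filter_upwards [Ioo_mem_nhds h0 h1] with x hx using ih hx.1 hx.2))
    have hne : ((p + 2 : ℕ) : ℂ) ≠ 0 := by exact_mod_cast (by omega : p + 2 ≠ 0)
    refine mul_left_cancel₀ (neg_ne_zero.2 hne) (heq.trans ?_)
    rw [Nat.descFactorial_succ, Nat.factorial_succ (p + 1), Nat.sub_sub]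
    have hfac : ((p + 1).factorial : ℂ) ≠ 0 := by exact_mod_cast Nat.factorial_ne_zero _
    push_cast at hne ⊢
    have hne' : (p + 1 + 1 : ℂ) ≠ 0 := by convert hne using 1; ring
    field_simp
    ring

theorem lineMoment_eq (p s : ℕ) {c : ℝ} (h0 : 0 < c) (h1 : c < 1) :
    lineMoment (p + 2) s c = 2 * π * (-1) ^ (s + p) / ((p + 1).factorial : ℂ) *
      s.descFactorial p * bernoulliFun (s - p) c := by
  have step : ∀ p s : ℕ, lineMoment (p + 1 + 2) (s + 1) c =
      2 * π * (-1) ^ (s + 1 + (p + 1)) / ((p + 1 + 1).factorial : ℂ) *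
        (s + 1).descFactorial (p + 1) * bernoulliFun (s + 1 - (p + 1)) c →
      lineMoment (p + 2) s c = 2 * π * (-1) ^ (s + p) / ((p + 1).factorial : ℂ) *
        s.descFactorial p * bernoulliFun (s - p) c := by
    intro p s h
    have hparts := lineMoment_succ_succ (m := p + 2) (by omega) s h0 h1
    have hs : (s + 1 : ℂ) ≠ 0 := by exact_mod_cast s.succ_ne_zero
    refine mul_left_cancel₀ hs (hparts.symm.trans ?_)
    rw [show p + 2 + 1 = p + 1 + 2 by ring, h, Nat.succ_descFactorial_succ,
      Nat.factorial_succ (p + 1), Nat.add_sub_add_right]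
    have hfac : ((p + 1).factorial : ℂ) ≠ 0 := by exact_mod_cast Nat.factorial_ne_zero _
    have hne : (p + 2 : ℂ) ≠ 0 := by exact_mod_cast (by omega : p + 2 ≠ 0)
    have hne' : (p + 1 + 1 : ℂ) ≠ 0 := by convert hne using 1; ring
    push_cast
    field_simp
    ring
  exact step p s (step (p + 1) (s + 1) (lineMoment_eq_of_two_le _ (by omega) h0 h1))

theorem iterate_derivative_bernoulli (k i : ℕ) :
    (Polynomial.derivative^[i]) (Polynomial.bernoulli k) =
      (k.descFactorial i : Polynomial ℚ) * Polynomial.bernoulli (k - i) := by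
  induction i with
  | zero => simp
  | succ i ih =>
    rw [Function.iterate_succ_apply', ih, Polynomial.derivative_mul, Polynomial.derivative_natCast,
      zero_mul, zero_add, Polynomial.derivative_bernoulli, Nat.descFactorial_succ, Nat.sub_sub]
    push_cast
    ring

theorem hasseDeriv_bernoulli (k i : ℕ) :
    Polynomial.hasseDeriv i (Polynomial.bernoulli k) =
      (k.choose i : Polynomial ℚ) * Polynomial.bernoulli (k - i) := by
  have h := congrFun (Polynomial.factorial_smul_hasseDeriv (R := ℚ) i) (Polynomial.bernoulli k)
  rw [iterate_derivative_bernoulli, Nat.descFactorial_eq_factorial_mul_choose] at h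
  have hi : (i.factorial : Polynomial ℚ) ≠ 0 := by exact_mod_cast i.factorial_ne_zero
  refine mul_left_cancel₀ hi ?_
  simp only [nsmul_eq_mul] at h
  refine Eq.trans ?_ (h.trans ?_)
  · rw [← nsmul_eq_mul, ← nsmul_eq_mul, LinearMap.smul_apply]
  · push_cast
    ring

theorem natDegree_bernoulli_le (k : ℕ) : (Polynomial.bernoulli k).natDegree ≤ k := by
  rw [Polynomial.bernoulli_def]
  exact Polynomial.natDegree_sum_le_of_forall_le _ _ fun i hi =>
    (Polynomial.natDegree_monomial_le _).trans (Nat.lt_succ_iff.1 (Finset.mem_range.1 hi))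

theorem hasseDeriv_map {R S : Type*} [Semiring R] [Semiring S] (f : R →+* S) (i : ℕ)
    (q : Polynomial R) :
    Polynomial.hasseDeriv i (q.map f) = (Polynomial.hasseDeriv i q).map f := by
  ext j
  simp [Polynomial.hasseDeriv_coeff]

theorem bpoly_add (k : ℕ) (x β : ℂ) :
    bpoly k (x + β) = ∑ r ∈ Finset.range (k + 1), (k.choose r : ℂ) * β ^ (k - r) * bpoly r x := by
  have h1 : bpoly k (x + β) =
      (Polynomial.taylor x ((Polynomial.bernoulli k).map (algebraMap ℚ ℂ))).eval β := by
    rw [Polynomial.taylor_eval, Polynomial.eval_map_algebraMap, bpoly, add_comm]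
  rw [h1, Polynomial.eval_eq_sum_range' (n := k + 1), ← Finset.sum_range_reflect]
  · refine Finset.sum_congr rfl fun r hr => ?_
    have hr' : r ≤ k := by simpa [Nat.lt_succ_iff] using hr
    rw [Polynomial.taylor_coeff, hasseDeriv_map, hasseDeriv_bernoulli,
      Polynomial.eval_map_algebraMap, show k + 1 - 1 - r = k - r by omega, Nat.sub_sub_self hr',
      Nat.choose_symm hr', bpoly]
    simp
    ring
  · rw [Polynomial.natDegree_taylor]
    exact Nat.lt_succ_of_le ((Polynomial.natDegree_map_le).trans (natDegree_bernoulli_le k))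

theorem bpoly_ofReal (k : ℕ) (x : ℝ) : bpoly k x = bernoulliFun k x := by
  rw [bpoly, bernoulliFun, Polynomial.eval_map_algebraMap]
  exact Polynomial.aeval_algebraMap_apply ℂ x (Polynomial.bernoulli k)

theorem sum_choose_mul_descFactorial_mul_bpoly {p w : ℕ} (hp : p ≤ w) (x β : ℂ) :
    ∑ s ∈ Finset.range (w + 1), (w.choose s : ℂ) * β ^ (w - s) *
      (s.descFactorial p * bpoly (s - p) x) = w.descFactorial p * bpoly (w - p) (x + β) := by
  rw [bpoly_add, Finset.mul_sum, show w + 1 = p + (w - p + 1) by omega, Finset.sum_range_add,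
    Finset.sum_eq_zero, zero_add]
  · refine Finset.sum_congr rfl fun r hr => ?_
    have hr' : r ≤ w - p := by simpa [Nat.lt_succ_iff] using hr
    have hc : w.choose (p + r) * (p + r).descFactorial p =
        w.descFactorial p * (w - p).choose r := by
      rw [Nat.descFactorial_eq_factorial_mul_choose, Nat.descFactorial_eq_factorial_mul_choose,
        mul_left_comm, Nat.choose_mul (by omega), Nat.add_sub_cancel_left, mul_assoc]
    have hc' : (w.choose (p + r) : ℂ) * (p + r).descFactorial p =
        w.descFactorial p * (w - p).choose r := by exact_mod_cast hc
    rw [Nat.add_sub_cancel_left, ← Nat.sub_sub]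
    linear_combination β ^ (w - p - r) * bpoly r x * hc'
  · intro s hs
    rw [Nat.descFactorial_of_lt (Finset.mem_range.1 hs)]
    simp

theorem latticeSum_mul_sub_pow_eq_sum (m w : ℕ) (c : ℝ) (β : ℂ) (y : ℝ) :
    latticeSum m (c + y * I) * (y * I - β) ^ w = ∑ s ∈ Finset.range (w + 1),
      (w.choose s : ℂ) * (-β) ^ (w - s) * (latticeSum m (c + y * I) * (y * I) ^ s) := by
  rw [sub_eq_add_neg, add_pow, Finset.mul_sum]
  exact Finset.sum_congr rfl fun s _ => by ring

theorem integrable_latticeSum_mul_sub_pow {m : ℕ} (hm : 2 ≤ m) (w : ℕ) {c : ℝ} (h0 : 0 < c)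
    (h1 : c < 1) (β : ℂ) :
    Integrable fun y : ℝ => latticeSum m (c + y * I) * (y * I - β) ^ w := by
  simp only [latticeSum_mul_sub_pow_eq_sum]
  exact integrable_finsetSum _ fun s _ => (integrable_moment_integrand hm s h0 h1).const_mul _

theorem integral_latticeSum_mul_sub_pow {p w : ℕ} (hp : p ≤ w) (hw : Even w) {c : ℝ} (h0 : 0 < c)
    (h1 : c < 1) (β : ℂ) :
    ∫ y : ℝ, latticeSum (p + 2) (c + y * I) * (y * I - β) ^ w =
      2 * π * (-1) ^ p / ((p + 1).factorial : ℂ) * w.descFactorial p *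
        bpoly (w - p) (c + β) := by
  simp only [latticeSum_mul_sub_pow_eq_sum]
  rw [integral_finsetSum _ fun s _ =>
    (integrable_moment_integrand (by omega) s h0 h1).const_mul _]
  simp only [integral_const_mul]
  rw [mul_assoc, ← sum_choose_mul_descFactorial_mul_bpoly hp, Finset.mul_sum]
  refine Finset.sum_congr rfl fun s hs => ?_
  have hs' : s ≤ w := by simpa [Nat.lt_succ_iff] using hs
  have hsign : (-1 : ℂ) ^ (w - s) * (-1) ^ s = 1 := by
    rw [← pow_add, Nat.sub_add_cancel hs', hw.neg_one_pow]
  have := lineMoment_eq p s h0 h1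
  rw [lineMoment] at this
  rw [this, bpoly_ofReal, neg_pow, pow_add]
  linear_combination (w.choose s : ℂ) * β ^ (w - s) * (2 * π * (-1) ^ p /
    ((p + 1).factorial : ℂ)) * s.descFactorial p * bernoulliFun (s - p) c * hsign

theorem integral_Ioi_comp_inv_mul {K : ℝ} (hK : 0 < K) (g : ℝ → ℂ) :
    ∫ y in Set.Ioi 0, g y = ∫ t in Set.Ioi (0 : ℝ), ((K : ℂ) * (t : ℂ) ^ 2)⁻¹ * g (K * t)⁻¹ := by
  have h1 := integral_comp_rpow_Ioi g (p := -1) (by norm_num)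
  have h2 := integral_comp_mul_left_Ioi
    (fun t : ℝ => (|(-1 : ℝ)| * t ^ ((-1 : ℝ) - 1)) • g (t ^ (-1 : ℝ))) 0 hK
  rw [mul_zero] at h2
  rw [← h1, ← inv_smul_smul₀ hK.ne' (∫ t in Set.Ioi (0 : ℝ), _), smul_comm, ← h2,
    ← integral_smul]
  refine setIntegral_congr_fun measurableSet_Ioi fun t ht => ?_
  have ht' : (0 : ℝ) < t := ht
  have e : (K * t) ^ ((-1 : ℝ) - 1) = ((K * t) ^ 2)⁻¹ := by
    rw [show (-1 : ℝ) - 1 = -(2 : ℕ) by norm_num, Real.rpow_neg (by positivity), Real.rpow_natCast]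
  simp only [e, Real.rpow_neg_one, abs_neg, abs_one, one_mul, Complex.real_smul]
  rw [← mul_assoc]
  congr 1
  have hK' : (K : ℂ) ≠ 0 := by exact_mod_cast hK.ne'
  have ht'' : (t : ℂ) ≠ 0 := by exact_mod_cast ht'.ne'
  push_cast
  field_simp

theorem S4_eq_latticeSum {D w n : ℕ} (hD : D ≠ 0) (hn : n ≤ w) (a : ℤ) {z : ℂ} (hz : z ≠ 0) :
    S4 D w n a z = 2 / (D * z) ^ (w + 2) * latticeSum (w - n + 1) (a / D - 1 / (D ^ 2 * z)) := by
  have hD' : (D : ℂ) ≠ 0 := by exact_mod_cast hD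
  rw [S4, latticeSum, div_mul_eq_mul_div, mul_div_assoc, ← tsum_div_const]
  congr 1
  refine tsum_congr fun k => ?_
  have h1 : ((a : ℂ) + k * D) * z - 1 / D = (D * z) * (a / D - 1 / (D ^ 2 * z) + k) := by
    field_simp
    ring
  rw [h1, mul_pow, div_div, show w + 2 = (w - n + 1) + (n + 1) by omega,
    pow_add _ (w - n + 1) (n + 1)]
  congr 1
  ring

theorem intI_S4_mul_sub_pow {D w n : ℕ} (hD : D ≠ 0) (hn : n ≤ w) (hw : Even w) (a : ℤ) {X : ℂ}
    (hX : X ≠ 0) :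
    intI (fun z => S4 D w n a z * (X - z) ^ w) = -2 * I * D ^ w * X ^ w *
      ∫ t in Set.Ioi (0 : ℝ), latticeSum (w - n + 1) (a / D + t * I) *
        (t * I - -(1 / (D ^ 2 * X))) ^ w := by
  have hD' : (D : ℂ) ≠ 0 := by exact_mod_cast hD
  have hK : (0 : ℝ) < (D : ℝ) ^ 2 := by positivity
  rw [intI, integral_Ioi_comp_inv_mul hK,
    show -2 * I * (D : ℂ) ^ w * X ^ w = I * (-2 * D ^ w * X ^ w) by ring, mul_assoc I,
    ← integral_const_mul (-2 * (D : ℂ) ^ w * X ^ w)]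
  congr 1
  refine setIntegral_congr_fun measurableSet_Ioi fun t ht => ?_
  have ht' : (t : ℂ) ≠ 0 := by exact_mod_cast (Set.mem_Ioi.1 ht).ne'
  have hz : I * (((D : ℝ) ^ 2 * t)⁻¹ : ℝ) = -(1 / (D ^ 2 * (t * I)) : ℂ) := by
    push_cast
    field_simp
    simp
  simp only [hz]
  have hz0 : -(1 / (D ^ 2 * (t * I)) : ℂ) ≠ 0 :=
    neg_ne_zero.2 (one_div_ne_zero (by simp [hD', ht']))
  rw [S4_eq_latticeSum hD hn a hz0]
  have h1 : (a / D - 1 / (D ^ 2 * -(1 / (D ^ 2 * (t * I)))) : ℂ) = a / D + t * I := by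
    field_simp
    ring
  have h2 : X - -(1 / (D ^ 2 * (t * I)) : ℂ) = X * (t * I - -(1 / (D ^ 2 * X))) / (t * I) := by
    field_simp
  have h3 : (D * -(1 / (D ^ 2 * (t * I))) : ℂ) = -(D * (t * I))⁻¹ := by
    field_simp
  have h4 : (I : ℂ) ^ 2 = -1 := I_sq
  rw [h1, h2, h3, (hw.add even_two).neg_pow, div_pow, mul_pow X]
  have h5 : (((D : ℝ) ^ 2 : ℝ) : ℂ) = (D : ℂ) ^ 2 := by push_cast; rfl
  rw [h5, inv_pow, pow_add _ w 2, mul_pow (D : ℂ), mul_pow (D : ℂ), mul_pow _ I 2, h4]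
  have h6 : (t * I : ℂ) ^ w ≠ 0 := pow_ne_zero _ (mul_ne_zero ht' I_ne_zero)
  field_simp

/-- the twisted period-polynomial contribution of the matrices with
bottom row `±(D, −h)` (for `N ∣ D`): for `0 < n < w`, `gcd(h,D) = 1`, `ah ≡ −1 (mod D)`,
and nonzero `X`,
`F_{4,h}(X) = c_n·(2i)^{w+1}·D^w·X^w·B_{n+1}({a/D} − 1/(D²X))/(n+1)`. -/
theorem F4_eval (N : ℕ) (hN : 1 ≤ N) (w : ℕ) (hw : 2 ≤ w) (hwe : Even w)
    (n : ℕ) (hn0 : 0 < n) (hnw : n < w) (D : ℕ) (hD : 1 < D) (hND : N ∣ D)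
    (h : ℤ) (hh : Int.gcd h D = 1) (a : ℤ) (ha : (D : ℤ) ∣ (a * h + 1))
    (X : ℂ) (hX : X ≠ 0) :
    intI (fun z => S4 D w n a z * (X - z) ^ w) +
      (-1 : ℂ) ^ (n - 1) * intI (fun z => S4 D w n (-a) z * (X + z) ^ w) =
    cconst w n * (2 * Complex.I) ^ (w + 1) * (D : ℂ) ^ w * X ^ w *
      bpoly (n + 1) (((Int.fract ((a : ℝ) / D) : ℝ) : ℂ) - 1 / (D ^ 2 * X)) /
      (n + 1) := by
  have hD0 : D ≠ 0 := by omega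
  have hDr : (D : ℝ) ≠ 0 := by exact_mod_cast hD0
  obtain ⟨p, rfl⟩ : ∃ p, w = n + p + 1 := ⟨w - n - 1, by omega⟩
  have hsub : n + p + 1 - n + 1 = p + 2 := by omega
  set w := n + p + 1 with hwdef
  set c : ℝ := Int.fract ((a : ℝ) / D) with hc
  set β : ℂ := -(1 / (D ^ 2 * X)) with hβ
  have hc1 : c < 1 := Int.fract_lt_one _
  have hc0 : 0 < c := by
    refine lt_of_le_of_ne (Int.fract_nonneg _) fun h0 => ?_
    obtain ⟨k, hk⟩ := Int.fract_eq_zero_iff.1 h0.symm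
    rw [eq_div_iff hDr] at hk
    have hdvd : (D : ℤ) ∣ a := ⟨k, by rw [mul_comm]; exact_mod_cast hk.symm⟩
    have h1 : (D : ℤ) ∣ 1 := (Int.dvd_add_right (hdvd.mul_right h)).1 ha
    have := Int.le_of_dvd one_pos h1
    omega
  have hac : (a / D : ℂ) = c + (⌊(a : ℝ) / D⌋ : ℤ) := by
    have : (a : ℝ) / D = c + ⌊(a : ℝ) / D⌋ := by rw [hc]; exact (Int.fract_add_floor _).symm
    exact_mod_cast congrArg (fun x : ℝ => (x : ℂ)) this
  let F : ℝ → ℂ := fun y => latticeSum (p + 2) (c + y * I) * (y * I - β) ^ w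
  have hF : Integrable F := integrable_latticeSum_mul_sub_pow (by omega) w hc0 hc1 β
  have e1 : intI (fun z => S4 D w n a z * (X - z) ^ w) =
      -2 * I * D ^ w * X ^ w * ∫ t in Set.Ioi (0 : ℝ), F t := by
    rw [intI_S4_mul_sub_pow hD0 hnw.le hwe a hX, hsub]
    congr 1
    refine integral_congr_ae (Filter.Eventually.of_forall fun t => ?_)
    simp only [F]
    rw [hac, add_right_comm, latticeSum_add_int]
  have e2 : intI (fun z => S4 D w n (-a) z * (X + z) ^ w) =
      -2 * I * D ^ w * X ^ w * ((-1) ^ p * ∫ t in Set.Ioi (0 : ℝ), F (-t)) := by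
    have : (fun z => S4 D w n (-a) z * (X + z) ^ w) =
        fun z => S4 D w n (-a) z * (-X - z) ^ w := by
      funext z
      rw [← hwe.neg_pow (X + z), neg_add']
    rw [this, intI_S4_mul_sub_pow hD0 hnw.le hwe (-a) (neg_ne_zero.2 hX), hsub, hwe.neg_pow,
      ← integral_const_mul ((-1 : ℂ) ^ p)]
    congr 1
    refine integral_congr_ae (Filter.Eventually.of_forall fun t => ?_)
    simp only [F]
    have h1 : (((-a : ℤ) : ℂ) / D + t * I) =
        -(c + ((-t : ℝ) : ℂ) * I + (⌊(a : ℝ) / D⌋ : ℤ)) := by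
      push_cast
      rw [neg_div, hac]
      ring
    have h2 : (t * I - -(1 / (D ^ 2 * -X)) : ℂ) = -(((-t : ℝ) : ℂ) * I - β) := by
      rw [hβ, mul_neg, div_neg]
      push_cast
      ring
    rw [h1, h2, latticeSum_neg, latticeSum_add_int, hwe.neg_pow, pow_add]
    ring
  have hsign : (-1 : ℂ) ^ (n - 1) * (-1) ^ p = 1 := by
    rw [← pow_add]
    refine Even.neg_one_pow ?_
    rw [hwdef] at hwe
    obtain ⟨q, hq⟩ := hwe
    exact ⟨q - 1, by omega⟩
  have htotal := integral_latticeSum_mul_sub_pow (p := p) (w := w) (by omega) hwe hc0 hc1 β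
  rw [show w - p = n + 1 by omega] at htotal
  have hsplit := integral_eq_Ioi_add_Ioi_neg hF
  have hfac : (w.descFactorial p : ℂ) * (n + 1) =
      w.choose n * ((p + 1).factorial : ℂ) := by
    have : w.descFactorial p * (n + 1) = w.choose n * (p + 1).factorial := by
      rw [← Nat.choose_symm hnw.le, show w - n = p + 1 by omega, mul_comm _ (p + 1).factorial,
        ← Nat.descFactorial_eq_factorial_mul_choose, Nat.descFactorial_succ, mul_comm,
        show w - p = n + 1 by omega]
    exact_mod_cast this
  have hcc : cconst w n * (2 * I) ^ (w + 1) = (-1) ^ n * 4 * π * I * w.choose n := by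
    have : (2 * I : ℂ) ^ (-(w : ℤ) - 1) * (2 * I) ^ (w + 1) = 1 := by
      rw [← zpow_natCast, ← zpow_add₀ (by simp)]
      push_cast
      rw [show -(w : ℤ) - 1 + (w + 1) = 0 by ring, zpow_zero]
    rw [cconst]
    linear_combination (-1) ^ n * 4 * π * I * w.choose n * this
  have hpn : (-1 : ℂ) ^ p = -(-1) ^ n := by
    obtain ⟨q, rfl⟩ : ∃ q, n = q + 1 := ⟨n - 1, by omega⟩
    have h1 : (-1 : ℂ) ^ q * (-1) ^ q = 1 := by rw [← mul_pow]; simp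
    rw [Nat.add_sub_cancel] at hsign
    rw [pow_succ]
    linear_combination (-1) ^ q * hsign - (-1) ^ p * h1
  have hn1 : (n + 1 : ℂ) ≠ 0 := by exact_mod_cast n.succ_ne_zero
  have hp1 : ((p + 1).factorial : ℂ) ≠ 0 := by exact_mod_cast Nat.factorial_ne_zero _
  have hval : (∫ t in Set.Ioi (0 : ℝ), F t) + (∫ t in Set.Ioi (0 : ℝ), F (-t)) =
      -2 * π * (-1) ^ n * w.choose n * bpoly (n + 1) (c + β) / (n + 1) := by
    rw [← hsplit]
    refine htotal.trans ?_
    rw [hpn]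
    field_simp
    linear_combination -bpoly (n + 1) (c + β) * hfac
  rw [e1, e2, hcc, sub_eq_add_neg, ← hβ]
  have : (-1 : ℂ) ^ (n - 1) * (-2 * I * D ^ w * X ^ w *
      ((-1) ^ p * ∫ t in Set.Ioi (0 : ℝ), F (-t))) =
      -2 * I * D ^ w * X ^ w * ∫ t in Set.Ioi (0 : ℝ), F (-t) := by
    linear_combination (-2 * I * D ^ w * X ^ w * ∫ t in Set.Ioi (0 : ℝ), F (-t)) * hsign
  rw [this, ← mul_add, hval]
  ring

end
end

section
/- Let N ≥ 1, let w ≥ 2 be even, let n be an integer with 0 < n < w, set ñ = w − n, let D > 1 and let h be a positive integer. Let S_{5,h}(z) = Σ_{(a b; c d) ∈ Γ₀(N), ac(ah/D+b)(ch/D+d) < 0} 1/((az + ah/D + b)^{ñ+1}·(cz + ch/D + d)^{n+1}) and F_{5,h}(X) = ∫₀^{i∞} S_{5,h}(z)(X−z)^w dz + (−1)^{n−1}·∫₀^{i∞} S_{5,−h}(z)(X+z)^w dz. Then for every complex number X: F_{5,h}(X) = c_n·(2i)^{w+1}·[ −Σ_{(a b; c d) ∈ Γ₀(N), a,c,k,ℓ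 > 0, D = ka+ℓc, h = −kb−ℓd} (aX − ℓ/D)^n·(cX + k/D)^{ñ} + Σ_{(a b; c d) ∈ Γ₀(N), a,k,ℓ > 0, c < 0, D = ka−ℓc, h = −kb+ℓd} (aX + ℓ/D)^n·(cX + k/D)^{ñ} ], where c_n = (−1)^n·4πi·(2i)^{−w−1}·C(w,n). -/
open MeasureTheory Complex Real

noncomputable section

/-- `S_{5,h}(z)`: the sub-sum of the series defining `R_n` over matrices
`(a b; c d) ∈ Γ₀(N)` with `ac(ah/D+b)(ch/D+d) < 0`. -/
def S5 (N D w n : ℕ) (h : ℤ) (z : ℂ) : ℂ :=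
  ∑' p : ℤ × ℤ × ℤ × ℤ,
    if p.1 * p.2.2.2 - p.2.1 * p.2.2.1 = 1 ∧ (N : ℤ) ∣ p.2.2.1 ∧
        (p.1 : ℝ) * p.2.2.1 * ((p.1 : ℝ) * h / D + p.2.1) *
          ((p.2.2.1 : ℝ) * h / D + p.2.2.2) < 0 then
      1 / (((p.1 : ℂ) * z + (p.1 : ℂ) * h / D + p.2.1) ^ (w - n + 1) *
          ((p.2.2.1 : ℂ) * z + (p.2.2.1 : ℂ) * h / D + p.2.2.2) ^ (n + 1))
    else 0

lemma norm_affine_div_le (p q : ℂ) {a x : ℝ} (ha : a ≠ 0) (hx : x ≠ 0) (s : ℝ) :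
    ‖(p + q * s) / ((a : ℂ) * (I * s) + x)‖ ≤ ‖p‖ / |x| + ‖q‖ / |a| := by
  have hre : |x| ≤ ‖(a : ℂ) * (I * s) + x‖ := by
    simpa using Complex.abs_re_le_norm ((a : ℂ) * (I * s) + x)
  have him : |a| * |s| ≤ ‖(a : ℂ) * (I * s) + x‖ := by
    simpa [abs_mul] using Complex.abs_im_le_norm ((a : ℂ) * (I * s) + x)
  have hx' := abs_pos.2 hx
  have ha' := abs_pos.2 ha
  have hpos := hx'.trans_le hre
  rw [norm_div, div_le_iff₀ hpos, add_mul]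
  refine (norm_add_le _ _).trans (add_le_add ?_ ?_)
  · rw [div_mul_eq_mul_div, le_div_iff₀ hx']
    gcongr
  · rw [div_mul_eq_mul_div, le_div_iff₀ ha', norm_mul, Complex.norm_real, Real.norm_eq_abs,
      mul_assoc, mul_comm |s|]
    gcongr

lemma affine_ne_zero (a : ℝ) {x : ℝ} (hx : x ≠ 0) (s : ℝ) : (a : ℂ) * (I * s) + x ≠ 0 := by
  intro h
  simpa [hx] using congrArg Complex.re h

lemma integrable_kernel (X : ℂ) {a x c y : ℝ} (ha : a ≠ 0) (hx : x ≠ 0) (hc : c ≠ 0) (hy : y ≠ 0)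
    (m n : ℕ) :
    Integrable fun s : ℝ => 1 / (((a : ℂ) * (I * s) + x) ^ (m + 1) *
      ((c : ℂ) * (I * s) + y) ^ (n + 1)) * (X - I * s) ^ (m + n) := by
  have hu := affine_ne_zero a hx
  have hv := affine_ne_zero c hy
  have hint : Integrable fun s : ℝ => (((1 + s ^ 2)⁻¹ : ℝ) : ℂ) :=
    integrable_inv_one_add_sq.ofReal
  refine (hint.bdd_mul (c := (‖X‖ / |x| + ‖-I‖ / |a|) ^ m * (‖X‖ / |y| + ‖-I‖ / |c|) ^ n *
      ((‖(1 : ℂ)‖ / |x| + ‖I‖ / |a|) * (‖(1 : ℂ)‖ / |y| + ‖-I‖ / |c|)))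
    (f := fun s : ℝ => ((X + -I * s) / ((a : ℂ) * (I * s) + x)) ^ m *
      ((X + -I * s) / ((c : ℂ) * (I * s) + y)) ^ n *
      ((1 + I * s) / ((a : ℂ) * (I * s) + x) * ((1 + -I * s) / ((c : ℂ) * (I * s) + y))))
    ?_ ?_).congr ?_
  · refine Continuous.aestronglyMeasurable ?_
    have h1 : Continuous fun s : ℝ => (a : ℂ) * (I * s) + x := by fun_prop
    have h2 : Continuous fun s : ℝ => (c : ℂ) * (I * s) + y := by fun_prop
    have h3 (q : ℂ) (p : ℂ) : Continuous fun s : ℝ => p + q * s := by fun_prop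
    exact ((((h3 _ _).div h1 hu).pow m).mul (((h3 _ _).div h2 hv).pow n)).mul
      (((h3 _ _).div h1 hu).mul ((h3 _ _).div h2 hv))
  · refine Filter.Eventually.of_forall fun s => ?_
    simp only [norm_mul (_ ^ m * _), norm_mul (_ ^ m), norm_pow, norm_mul (_ / _)]
    gcongr <;> exact norm_affine_div_le _ _ ‹_› ‹_› s
  · refine Filter.Eventually.of_forall fun s => ?_
    have h1 : (1 + (s : ℂ) ^ 2) ≠ 0 := by
      have : (1 + s ^ 2 : ℝ) ≠ 0 := by positivity
      exact_mod_cast this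
    have h2 : (1 + I * s) * (1 + -I * s) = 1 + (s : ℂ) ^ 2 := by
      linear_combination (-(s : ℂ) ^ 2) * I_sq
    have hu := hu s
    have hv := hv s
    simp only
    push_cast
    generalize (a : ℂ) * (I * s) + x = u at *
    generalize (c : ℂ) * (I * s) + y = v at *
    rw [div_mul_div_comm, h2, div_pow, div_pow, show X + -I * s = X - I * s by ring]
    field_simp
    ring

lemma kernel_expansion (u v A B : ℂ) (hu : u ≠ 0) (hv : v ≠ 0) (m n : ℕ) :
    1 / (u ^ (m + 1) * v ^ (n + 1)) * (A * v + -B * u) ^ (m + n) =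
      ∑ j ∈ Finset.range (m + n + 1), ((m + n).choose j * A ^ j * (-B) ^ (m + n - j)) *
        ((u / v) ^ ((n : ℤ) - j - 1) * (1 / v ^ 2)) := by
  rw [add_pow, Finset.mul_sum]
  refine Finset.sum_congr rfl fun j hj => ?_
  have hj : j ≤ m + n := by simpa [Nat.lt_succ_iff] using hj
  have key : v ^ j * u ^ (m + n - j) / (u ^ (m + 1) * v ^ (n + 1)) =
      (u / v) ^ ((n : ℤ) - j - 1) * (1 / v ^ 2) := by
    rw [div_zpow, div_mul_div_comm, mul_one, ← zpow_natCast v 2, ← zpow_add₀ hv]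
    rw [mul_comm (v ^ j), mul_div_mul_comm, div_eq_mul_inv (u ^ ((n : ℤ) - j - 1)),
      ← zpow_natCast, ← zpow_natCast, ← zpow_natCast, ← zpow_natCast, ← zpow_sub₀ hu, ← zpow_sub₀ hv,
      ← zpow_neg]
    congr 2 <;> push_cast [Nat.cast_sub hj] <;> ring
  rw [← key, mul_pow, mul_pow]
  ring

lemma log_limits {T : ℝ → ℂ} {r : ℝ} {l : Filter ℝ} (hr : r < 0)
    (hT : Filter.Tendsto T l (nhds (r : ℂ))) :
    ((∀ᶠ s in l, 0 ≤ (T s).im) →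
      Filter.Tendsto (fun s => log (T s)) l (nhds (Real.log |r| + π * I))) ∧
    ((∀ᶠ s in l, (T s).im < 0) →
      Filter.Tendsto (fun s => log (T s)) l (nhds (Real.log |r| - π * I))) := by
  constructor
  · intro h
    have := (Complex.tendsto_log_nhdsWithin_im_nonneg_of_re_neg_of_im_zero (z := r)
      (by simpa using hr) (by simp)).comp (tendsto_nhdsWithin_iff.2 ⟨hT, h⟩)
    simpa [Function.comp_def] using this
  · intro h
    have := (Complex.tendsto_log_nhdsWithin_im_neg_of_re_neg_of_im_zero (z := r)
      (by simpa using hr) (by simp)).comp (tendsto_nhdsWithin_iff.2 ⟨hT, h⟩)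
    simpa [Function.comp_def] using this

lemma tendsto_moebius {a x c y : ℝ} (hc : c ≠ 0) {l : Filter ℝ}
    (hl : Filter.Tendsto (fun s : ℝ => (s : ℂ)⁻¹) l (nhds 0)) (hne : ∀ᶠ s in l, s ≠ 0) :
    Filter.Tendsto (fun s : ℝ => ((a : ℂ) * (I * s) + x) / ((c : ℂ) * (I * s) + y)) l
      (nhds ((a : ℂ) / c)) := by
  have hc' : (c : ℂ) ≠ 0 := by exact_mod_cast hc
  have h1 (a x : ℝ) : Filter.Tendsto (fun s : ℝ => (a : ℂ) * I + x * (s : ℂ)⁻¹) l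
      (nhds ((a : ℂ) * I)) := by
    simpa using (hl.const_mul (x : ℂ)).const_add ((a : ℂ) * I)
  have := (h1 a x).div (h1 c y) (mul_ne_zero hc' I_ne_zero)
  rw [mul_div_mul_right _ _ I_ne_zero] at this
  refine this.congr' ?_
  filter_upwards [hne] with s hs
  have hs : (s : ℂ) ≠ 0 := by exact_mod_cast hs
  simp only [Pi.div_apply]
  rw [← mul_div_mul_right _ _ hs]
  congr 1 <;> field_simp

lemma integral_kernel (X : ℂ) {a x c y σ : ℝ} (hdet : a * y - c * x = 1)
    (hneg : a * c * x * y < 0) (hσ : σ = 1 ∨ σ = -1) (hσxy : 0 < σ * (x * y)) (m n : ℕ) :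
    I * ∫ s : ℝ, 1 / (((a : ℂ) * (I * s) + x) ^ (m + 1) *
      ((c : ℂ) * (I * s) + y) ^ (n + 1)) * (X - I * s) ^ (m + n) =
    2 * π * I * σ * ((-1) ^ m * (m + n).choose n * (a * X + x) ^ n * (c * X + y) ^ m) := by
  have ha : a ≠ 0 := by rintro rfl; simp at hneg
  have hx : x ≠ 0 := by rintro rfl; simp at hneg
  have hc : c ≠ 0 := by rintro rfl; simp at hneg
  have hy : y ≠ 0 := by rintro rfl; simp at hneg
  have hσ0 : σ ≠ 0 := by rintro rfl; simp at hσxy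
  have hdetC : (a : ℂ) * y - c * x = 1 := by exact_mod_cast hdet
  have hacC : (a : ℂ) / c ≠ 0 := by
    exact_mod_cast div_ne_zero ha hc
  have hσac : σ * (a / c) < 0 := by
    have h1 : σ * (a * c) < 0 := by
      by_contra! h
      have := mul_nonneg h hσxy.le
      rcases hσ with rfl | rfl <;> nlinarith
    have h2 : σ * (a / c) = σ * (a * c) / c ^ 2 := by field_simp
    rw [h2]
    exact div_neg_of_neg_of_pos h1 (by positivity)
  have hu := affine_ne_zero a hx
  have hv := affine_ne_zero c hy
  set T : ℝ → ℂ := fun s => ((a : ℂ) * (I * s) + x) / ((c : ℂ) * (I * s) + y) with hT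
  have hT0 (s : ℝ) : T s ≠ 0 := div_ne_zero (hu s) (hv s)
  have hTim (s : ℝ) : (σ * T s).im = σ * (s / normSq ((c : ℂ) * (I * s) + y)) := by
    rw [im_ofReal_mul, hT, div_im]
    simp only [add_re, add_im, re_ofReal_mul, im_ofReal_mul, I_mul_re, I_mul_im, ofReal_re,
      ofReal_im]
    linear_combination σ * s / normSq ((c : ℂ) * (I * s) + y) * hdet
  have hslit (s : ℝ) : (σ : ℂ) * T s ∈ slitPlane := by
    rw [mem_slitPlane_iff]
    rcases eq_or_ne s 0 with rfl | hs
    · left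
      have h2 : (σ : ℂ) * T 0 = ((σ * (x * y) / y ^ 2 : ℝ) : ℂ) := by
        have hyC : (y : ℂ) ≠ 0 := by exact_mod_cast hy
        simp only [hT]
        push_cast
        rw [mul_zero, mul_zero, zero_add, mul_zero, zero_add]
        field_simp
      rw [h2, ofReal_re]
      positivity
    · right
      rw [hTim]
      exact mul_ne_zero hσ0 (div_ne_zero hs (normSq_eq_zero.not.2 (hv s)))
  have hTd (s : ℝ) : HasDerivAt T (I * (1 / ((c : ℂ) * (I * s) + y) ^ 2)) s := by
    have h1 (a x : ℝ) : HasDerivAt (fun s : ℝ => (a : ℂ) * (I * s) + x) (a * I) s := by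
      simpa using (((hasDerivAt_id s).ofReal_comp.const_mul I).const_mul (a : ℂ)).add_const (x : ℂ)
    refine ((h1 a x).div (h1 c y) (hv s)).congr_deriv ?_
    rw [mul_one_div]
    congr 1
    linear_combination I * hdetC
  set P : ℕ → ℝ → ℂ := fun j s =>
    if j = n then log (σ * T s) else T s ^ ((n : ℤ) - j) / ((n : ℂ) - j) with hP
  have hPd (j : ℕ) (s : ℝ) :
      HasDerivAt (P j) (T s ^ ((n : ℤ) - j - 1) * (I * (1 / ((c : ℂ) * (I * s) + y) ^ 2))) s := by
    simp only [hP]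
    split_ifs with hj
    · have hσC : (σ : ℂ) ≠ 0 := by exact_mod_cast hσ0
      refine (((hTd s).const_mul (σ : ℂ)).clog_real (hslit s)).congr_deriv ?_
      rw [mul_div_mul_left _ _ hσC, hj, sub_self, zero_sub, zpow_neg_one, div_eq_inv_mul]
    · have hj' : ((n : ℂ) - j) ≠ 0 := sub_ne_zero.2 (by exact_mod_cast Ne.symm hj)
      refine (((hasDerivAt_zpow ((n : ℤ) - j) (T s) (Or.inl (hT0 s))).comp s (hTd s)).div_const
        ((n : ℂ) - j)).congr_deriv ?_
      push_cast
      rw [mul_assoc, mul_div_cancel_left₀ _ hj']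
  set co : ℕ → ℂ := fun j => (m + n).choose j * (a * X + x) ^ j * (-(c * X + y)) ^ (m + n - j)
    with hco
  have hderiv (s : ℝ) : HasDerivAt (fun s => ∑ j ∈ Finset.range (m + n + 1), co j * P j s)
      (I * (1 / (((a : ℂ) * (I * s) + x) ^ (m + 1) *
        ((c : ℂ) * (I * s) + y) ^ (n + 1)) * (X - I * s) ^ (m + n))) s := by
    have h1 := HasDerivAt.fun_sum (u := Finset.range (m + n + 1))
      fun j _ => (hPd j s).const_mul (co j)
    have h2 : X - I * s = (a * X + x) * ((c : ℂ) * (I * s) + y) +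
        -(c * X + y) * ((a : ℂ) * (I * s) + x) := by
      linear_combination (-X + I * s) * hdetC
    rw [h2, kernel_expansion _ _ _ _ (hu s) (hv s), Finset.mul_sum]
    refine h1.congr_deriv (Finset.sum_congr rfl fun j _ => ?_)
    simp only [hco, hT]
    ring
  have hlim (l : Filter ℝ) (L : ℂ) 
      (hl : Filter.Tendsto T l (nhds ((a : ℂ) / c)))
      (hlog : Filter.Tendsto (fun s => log (σ * T s)) l (nhds L)) :
      Filter.Tendsto (fun s => ∑ j ∈ Finset.range (m + n + 1), co j * P j s) l
        (nhds (∑ j ∈ Finset.range (m + n + 1), co j *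
          if j = n then L else ((a : ℂ) / c) ^ ((n : ℤ) - j) / ((n : ℂ) - j))) := by
    refine tendsto_finsetSum _ fun j _ => Filter.Tendsto.const_mul _ ?_
    simp only [hP]
    split_ifs
    · exact hlog
    · exact (hl.zpow₀ _ (Or.inl hacC)).div_const _
  have htop : Filter.Tendsto T Filter.atTop (nhds ((a : ℂ) / c)) :=
    tendsto_moebius hc (by
      simpa [Function.comp_def] using
        (continuous_ofReal.tendsto 0).comp (tendsto_inv_atTop_zero (𝕜 := ℝ)))
      (Filter.eventually_ne_atTop 0)
  have hbot : Filter.Tendsto T Filter.atBot (nhds ((a : ℂ) / c)) :=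
    tendsto_moebius hc (by
      simpa [Function.comp_def] using
        (continuous_ofReal.tendsto 0).comp (tendsto_inv_atBot_zero (𝕜 := ℝ)))
      (Filter.eventually_ne_atBot 0)
  have hscale {l : Filter ℝ} (hl : Filter.Tendsto T l (nhds ((a : ℂ) / c))) :
      Filter.Tendsto (fun s => σ * T s) l (nhds ((σ * (a / c) : ℝ) : ℂ)) := by
    simpa using hl.const_mul (σ : ℂ)
  have hlogs : ∃ Lt Lb : ℂ, Lt - Lb = 2 * π * I * σ ∧
      Filter.Tendsto (fun s => log (σ * T s)) Filter.atTop (nhds Lt) ∧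
      Filter.Tendsto (fun s => log (σ * T s)) Filter.atBot (nhds Lb) := by
    have hpos (s : ℝ) : 0 < normSq ((c : ℂ) * (I * s) + y) := normSq_pos.2 (hv s)
    have ht := log_limits hσac (hscale htop)
    have hb := log_limits hσac (hscale hbot)
    rcases hσ with h | h
    · refine ⟨_, _, ?_, ht.1 ?_, hb.2 ?_⟩
      · rw [h]; push_cast; ring
      · filter_upwards [Filter.eventually_gt_atTop 0] with s hs
        rw [hTim, h, one_mul]
        exact (div_pos hs (hpos s)).le
      · filter_upwards [Filter.eventually_lt_atBot 0] with s hs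
        rw [hTim, h, one_mul]
        exact div_neg_of_neg_of_pos hs (hpos s)
    · refine ⟨_, _, ?_, ht.2 ?_, hb.1 ?_⟩
      · rw [h]; push_cast; ring
      · filter_upwards [Filter.eventually_gt_atTop 0] with s hs
        rw [hTim, h, neg_one_mul]
        exact neg_neg_of_pos (div_pos hs (hpos s))
      · filter_upwards [Filter.eventually_lt_atBot 0] with s hs
        rw [hTim, h, neg_one_mul]
        exact (neg_pos.2 (div_neg_of_neg_of_pos hs (hpos s))).le
  obtain ⟨Lt, Lb, hL, hLt, hLb⟩ := hlogs
  rw [← integral_const_mul, integral_of_hasDerivAt_of_tendsto hderiv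
    ((integrable_kernel X ha hx hc hy m n).const_mul I) (hlim _ Lb hbot hLb) (hlim _ Lt htop hLt),
    ← Finset.sum_sub_distrib, Finset.sum_eq_single n]
  · simp only [if_true, ← mul_sub, hL, hco, Nat.add_sub_cancel]
    rw [neg_pow]
    ring
  · intro j _ hj
    simp [hj]
  · intro h
    exact absurd (Finset.mem_range.2 (by omega)) h

lemma intI_add_intI_neg (G : ℂ → ℂ) (hG : Integrable fun s : ℝ => G (I * s)) :
    intI G + intI (fun z => G (-z)) = I * ∫ s : ℝ, G (I * s) := by
  have h1 : ∫ s in Set.Ioi (0 : ℝ), G (-(I * s)) = ∫ s in Set.Iic (0 : ℝ), G (I * s) := by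
    simpa using integral_comp_neg_Ioi 0 fun s : ℝ => G (I * s)
  rw [intI, intI, h1, ← mul_add, add_comm,
    intervalIntegral.integral_Iic_add_Ioi hG.integrableOn hG.integrableOn]

/-- The matrices over which `S5` is summed, with denominators cleared. -/
def Admissible (N D : ℕ) (h : ℤ) (p : ℤ × ℤ × ℤ × ℤ) : Prop :=
  p.1 * p.2.2.2 - p.2.1 * p.2.2.1 = 1 ∧ (N : ℤ) ∣ p.2.2.1 ∧
    p.1 * p.2.2.1 * (p.1 * h + p.2.1 * D) * (p.2.2.1 * h + p.2.2.2 * D) < 0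

lemma admissible_iff_real (N : ℕ) {D : ℕ} (hD : 0 < D) (h : ℤ) (p : ℤ × ℤ × ℤ × ℤ) :
    (p.1 * p.2.2.2 - p.2.1 * p.2.2.1 = 1 ∧ (N : ℤ) ∣ p.2.2.1 ∧
        (p.1 : ℝ) * p.2.2.1 * ((p.1 : ℝ) * h / D + p.2.1) *
          ((p.2.2.1 : ℝ) * h / D + p.2.2.2) < 0) ↔ Admissible N D h p := by
  have hD' : (0 : ℝ) < D := by exact_mod_cast hD
  have key : (p.1 : ℝ) * p.2.2.1 * ((p.1 : ℝ) * h / D + p.2.1) *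
      ((p.2.2.1 : ℝ) * h / D + p.2.2.2) =
      ((p.1 * p.2.2.1 * (p.1 * h + p.2.1 * D) * (p.2.2.1 * h + p.2.2.2 * D) : ℤ) : ℝ) / D ^ 2 := by
    push_cast
    field_simp
  rw [Admissible, key, div_lt_iff₀ (by positivity), zero_mul, Int.cast_lt_zero]

lemma Admissible.signs {N D : ℕ} {h : ℤ} {p : ℤ × ℤ × ℤ × ℤ} (hp : Admissible N D h p) :
    p.1 * (p.2.2.1 * h + p.2.2.2 * D) - p.2.2.1 * (p.1 * h + p.2.1 * D) = D ∧
      0 < p.1 * (p.2.2.1 * h + p.2.2.2 * D) ∧ p.2.2.1 * (p.1 * h + p.2.1 * D) < 0 := by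
  obtain ⟨a, b, c, d⟩ := p
  obtain ⟨h1, -, h3⟩ := hp
  simp only at *
  have hd : a * (c * h + d * D) - c * (a * h + b * D) = D := by
    linear_combination (D : ℤ) * h1
  have hD : (0 : ℤ) ≤ D := by positivity
  have hprod : (a * (c * h + d * D)) * (c * (a * h + b * D)) < 0 := by
    calc _ = a * c * (a * h + b * D) * (c * h + d * D) := by ring
      _ < 0 := h3
  refine ⟨hd, ?_⟩
  rcases mul_neg_iff.1 hprod with h | h
  · exact h
  · linarith [h.1, h.2]

lemma finite_admissible (N : ℕ) {D : ℕ} (hD : 0 < D) (h : ℤ) :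
    {p | Admissible N D h p}.Finite := by
  have hfin := Set.finite_Icc (-(D + D * |h|) : ℤ) (D + D * |h|)
  refine (hfin.prod (hfin.prod (hfin.prod hfin))).subset ?_
  rintro ⟨a, b, c, d⟩ hp
  obtain ⟨h1, h2, h3⟩ := hp.signs
  simp only at h1 h2 h3
  have hD' : (1 : ℤ) ≤ D := by exact_mod_cast hD
  have factor {u v : ℤ} (hne : u * v ≠ 0) (hle : |u * v| ≤ D) : |u| ≤ D ∧ |v| ≤ D := by
    have hu : 1 ≤ |u| := Int.one_le_abs (left_ne_zero_of_mul hne)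
    have hv : 1 ≤ |v| := Int.one_le_abs (right_ne_zero_of_mul hne)
    rw [abs_mul] at hle
    constructor <;> nlinarith
  have hh := abs_nonneg h
  have solve {u v t : ℤ} (hu : |u| ≤ D) (ht : |t| ≤ D) (e : u * h + v * D = t) :
      |v| ≤ D + D * |h| := by
    have e1 : |v| * D = |t - u * h| := by
      rw [← e, add_sub_cancel_left, abs_mul, Nat.abs_cast]
    have e2 : |t - u * h| ≤ |t| + |u| * |h| := by
      rw [← abs_mul]; exact abs_sub _ _
    have e3 : |u| * |h| ≤ D * |h| := by gcongr
    have e4 : |v| ≤ |v| * D := le_mul_of_one_le_right (abs_nonneg v) hD'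
    linarith
  obtain ⟨ha, hY⟩ := factor h2.ne' (by rw [abs_of_pos h2]; linarith)
  obtain ⟨hc, hX⟩ := factor h3.ne (by rw [abs_of_neg h3]; linarith)
  have hb := solve ha hX rfl
  have hd := solve hc hY rfl
  have hDh : (0 : ℤ) ≤ D * |h| := by positivity
  simp only [Set.mem_prod, Set.mem_Icc, ← abs_le]
  exact ⟨by linarith, hb, by linarith, hd⟩

/-- The left upper (resp. lower) entry shifted by `h / D`. -/
def shift (D : ℕ) (h a b : ℤ) : ℝ := a * h / D + b

lemma shift_eq {D : ℕ} (hD : 0 < D) (h a b : ℤ) :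
    shift D h a b = ((a * h + b * D : ℤ) : ℝ) / D := by
  have hD' : (D : ℝ) ≠ 0 := by exact_mod_cast hD.ne'
  rw [shift]
  push_cast
  field_simp

/-- The summand of `S5`. -/
def summand (D w n : ℕ) (h : ℤ) (p : ℤ × ℤ × ℤ × ℤ) (z : ℂ) : ℂ :=
  1 / ((((p.1 : ℝ) : ℂ) * z + (shift D h p.1 p.2.1 : ℝ)) ^ (w - n + 1) *
    (((p.2.2.1 : ℝ) : ℂ) * z + (shift D h p.2.2.1 p.2.2.2 : ℝ)) ^ (n + 1))

open Classical in
lemma S5_eq_tsum (N : ℕ) {D : ℕ} (hD : 0 < D) (w n : ℕ) (h : ℤ) (z : ℂ) :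
    S5 N D w n h z = ∑' p, if Admissible N D h p then summand D w n h p z else 0 := by
  rw [S5]
  refine tsum_congr fun p => ?_
  simp only [admissible_iff_real N hD]
  congr 1
  simp only [summand, shift]
  push_cast
  simp only [add_assoc]

open Classical in
lemma S5_eq_sum (N : ℕ) {D : ℕ} (hD : 0 < D) (w n : ℕ) (h : ℤ) (z : ℂ) :
    S5 N D w n h z = ∑ p ∈ (finite_admissible N hD h).toFinset, summand D w n h p z := by
  rw [S5_eq_tsum N hD, tsum_eq_sum (s := (finite_admissible N hD h).toFinset)]
  · exact Finset.sum_congr rfl fun p hp => if_pos (by simpa using hp)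
  · exact fun p hp => if_neg (by simpa using hp)

lemma S5_neg (N : ℕ) {D : ℕ} (hD : 0 < D) {w n : ℕ} (hwe : Even w) (hn0 : 0 < n) (hnw : n < w)
    (h : ℤ) (z : ℂ) : (-1 : ℂ) ^ (n - 1) * S5 N D w n (-h) z = S5 N D w n h (-z) := by
  classical
  let e : ℤ × ℤ × ℤ × ℤ ≃ ℤ × ℤ × ℤ × ℤ :=
    (Equiv.refl ℤ).prodCongr ((Equiv.neg ℤ).prodCongr ((Equiv.neg ℤ).prodCongr (Equiv.refl ℤ)))
  rw [S5_eq_tsum N hD, S5_eq_tsum N hD, ← tsum_mul_left, ← e.tsum_eq]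
  refine tsum_congr ?_
  rintro ⟨a, b, c, d⟩
  have hadm : Admissible N D (-h) (e (a, b, c, d)) ↔ Admissible N D h (a, b, c, d) := by
    simp only [Admissible, e, Equiv.prodCongr_apply, Prod.map, Equiv.refl_apply, Equiv.neg_apply,
      dvd_neg]
    ring_nf
  simp only [hadm, mul_ite, mul_zero]
  refine if_congr Iff.rfl ?_ rfl
  simp only [summand, shift, e, Equiv.prodCongr_apply, Prod.map, Equiv.refl_apply, Equiv.neg_apply]
  push_cast
  have h1 : (a : ℂ) * z + (a * -h / D + -b) = -(a * -z + (a * h / D + b)) := by ring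
  have h2 : -(c : ℂ) * z + (-c * -h / D + d) = c * -z + (c * h / D + d) := by ring
  have hodd : (-1 : ℂ) ^ (w - n + 1) = (-1) ^ (n - 1) := by
    refine neg_one_pow_congr ?_
    rw [Nat.even_iff] at *
    rw [Nat.even_iff]
    omega
  rw [h1, h2, neg_pow (_ + _) (w - n + 1), hodd]
  rcases neg_one_pow_eq_or ℂ (n - 1) with h | h <;> rw [h] <;> simp

lemma cconst_mul (w n : ℕ) :
    cconst w n * (2 * I) ^ (w + 1) = (-1) ^ n * (4 * π * I) * w.choose n := by
  have h0 : (2 * I : ℂ) ≠ 0 := by simp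
  have h1 : (2 * I : ℂ) ^ (-(w : ℤ) - 1) * (2 * I) ^ (w + 1) = 1 := by
    rw [← zpow_natCast, ← zpow_add₀ h0]
    simp
  rw [cconst]
  linear_combination (-1) ^ n * (4 * π * I) * w.choose n * h1

/-- The monomial `(aX + x) ^ n (cX + y) ^ (w - n)` attached to a matrix. -/
def mono (D w n : ℕ) (h : ℤ) (X : ℂ) (p : ℤ × ℤ × ℤ × ℤ) : ℂ :=
  (((p.1 : ℝ) : ℂ) * X + (shift D h p.1 p.2.1 : ℝ)) ^ n *
    (((p.2.2.1 : ℝ) : ℂ) * X + (shift D h p.2.2.1 p.2.2.2 : ℝ)) ^ (w - n)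

/-- The relative sign of the two shifted entries. -/
def orient (D : ℕ) (h : ℤ) (p : ℤ × ℤ × ℤ × ℤ) : ℝ :=
  if 0 < (p.1 * h + p.2.1 * D) * (p.2.2.1 * h + p.2.2.2 * D) then 1 else -1

lemma integral_summand {N D : ℕ} (hD : 0 < D) {w n : ℕ} (hnw : n < w) {h : ℤ}
    {p : ℤ × ℤ × ℤ × ℤ} (hp : Admissible N D h p) (X : ℂ) :
    (Integrable fun s : ℝ => summand D w n h p (I * s) * (X - I * s) ^ w) ∧
    I * ∫ s : ℝ, summand D w n h p (I * s) * (X - I * s) ^ w =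
      2 * π * I * orient D h p * ((-1) ^ (w - n) * w.choose n * mono D w n h X p) := by
  obtain ⟨a, b, c, d⟩ := p
  have hD' : (0 : ℝ) < D := by exact_mod_cast hD
  have hneg := ((admissible_iff_real N hD h _).2 hp).2.2
  simp only at hneg
  change (a : ℝ) * c * shift D h a b * shift D h c d < 0 at hneg
  have hdet : (a : ℝ) * shift D h c d - c * shift D h a b = 1 := by
    have h1 : (a : ℝ) * d - b * c = 1 := by exact_mod_cast hp.1
    simp only [shift]
    linear_combination h1
  have hw : w - n + n = w := by omega
  have ha : (a : ℝ) ≠ 0 := by intro h; simp [h] at hneg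
  have hc : (c : ℝ) ≠ 0 := by intro h; simp [h] at hneg
  have hx : shift D h a b ≠ 0 := by intro h; simp [h] at hneg
  have hy : shift D h c d ≠ 0 := by intro h; simp [h] at hneg
  have hor : orient D h (a, b, c, d) = 1 ∨ orient D h (a, b, c, d) = -1 := by
    rw [orient]; split_ifs <;> simp
  have hpos : 0 < orient D h (a, b, c, d) * (shift D h a b * shift D h c d) := by
    have hne := mul_ne_zero hx hy
    rw [shift_eq hD, shift_eq hD, div_mul_div_comm, ← Int.cast_mul] at hne ⊢
    rw [orient]
    simp only
    split_ifs with hs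
    · rw [one_mul]
      exact div_pos (by exact_mod_cast hs) (by positivity)
    · rw [neg_one_mul, neg_pos]
      have h0 := Int.cast_ne_zero.1 (left_ne_zero_of_mul (by simpa only [div_eq_mul_inv] using hne))
      exact div_neg_of_neg_of_pos (Int.cast_lt_zero.2 (lt_of_le_of_ne (not_lt.1 hs) h0))
        (by positivity)
  have hI := integrable_kernel X ha hx hc hy (w - n) n
  have hE := integral_kernel X hdet hneg hor hpos (w - n) n
  rw [hw] at hI hE
  refine ⟨hI, hE.trans ?_⟩
  simp only [mono]
  ring

lemma mono_neg (D : ℕ) {w n : ℕ} (hwe : Even w) (hnw : n < w) (h : ℤ) (X : ℂ)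
    (p : ℤ × ℤ × ℤ × ℤ) : mono D w n h X (-p) = mono D w n h X p := by
  obtain ⟨a, b, c, d⟩ := p
  simp only [mono, shift, Prod.neg_mk]
  push_cast
  have h1 (a b : ℂ) : -a * X + (-a * h / D + -b) = -(a * X + (a * h / D + b)) := by ring
  rw [h1, h1, neg_pow, neg_pow (_ + _) (w - n)]
  have h2 : (-1 : ℂ) ^ n * (-1) ^ (w - n) = 1 := by
    rw [← pow_add, Nat.add_sub_cancel' hnw.le, hwe.neg_one_pow]
  linear_combination (((a : ℂ) * X + (a * h / D + b)) ^ n *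
    ((c : ℂ) * X + (c * h / D + d)) ^ (w - n)) * h2

lemma admissible_neg {N D : ℕ} {h : ℤ} {p : ℤ × ℤ × ℤ × ℤ} :
    Admissible N D h (-p) ↔ Admissible N D h p := by
  obtain ⟨a, b, c, d⟩ := p
  simp only [Admissible, Prod.neg_mk, dvd_neg]
  ring_nf

lemma orient_neg (D : ℕ) (h : ℤ) (p : ℤ × ℤ × ℤ × ℤ) : orient D h (-p) = orient D h p := by
  obtain ⟨a, b, c, d⟩ := p
  simp only [orient, Prod.neg_mk]
  ring_nf

lemma Admissible.orient_eq {N D : ℕ} {h : ℤ} {p : ℤ × ℤ × ℤ × ℤ} (hp : Admissible N D h p)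
    (ha : 0 < p.1) :
    (0 < p.2.2.1 ∧ orient D h p = -1) ∨ (p.2.2.1 < 0 ∧ orient D h p = 1) := by
  obtain ⟨-, h2, h3⟩ := hp.signs
  have hY := pos_of_mul_pos_right h2 ha.le
  rcases mul_neg_iff.1 h3 with ⟨hc, hX⟩ | ⟨hc, hX⟩
  · exact Or.inl ⟨hc, if_neg (not_lt.2 (mul_neg_of_neg_of_pos hX hY).le)⟩
  · exact Or.inr ⟨hc, if_pos (mul_pos hX hY)⟩

open Classical in
lemma sum_orient_mono (N : ℕ) {D : ℕ} (hD : 0 < D) {w n : ℕ} (hwe : Even w) (hnw : n < w)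
    (h : ℤ) (X : ℂ) :
    ∑ p ∈ (finite_admissible N hD h).toFinset, orient D h p * mono D w n h X p =
      2 * (-(∑' p : ℤ × ℤ × ℤ × ℤ,
          if Admissible N D h p ∧ 0 < p.1 ∧ 0 < p.2.2.1 then mono D w n h X p else 0) +
        ∑' p : ℤ × ℤ × ℤ × ℤ,
          if Admissible N D h p ∧ 0 < p.1 ∧ p.2.2.1 < 0 then mono D w n h X p else 0) := by
  set S := (finite_admissible N hD h).toFinset with hS
  have hmem (p) : p ∈ S ↔ Admissible N D h p := by simp [hS]
  rw [tsum_eq_sum (s := S) fun p hp => if_neg fun hq => hp ((hmem p).2 hq.1),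
    tsum_eq_sum (s := S) fun p hp => if_neg fun hq => hp ((hmem p).2 hq.1),
    ← Finset.sum_neg_distrib, ← Finset.sum_add_distrib]
  have hhalf : ∑ p ∈ S with 0 < p.1, orient D h p * mono D w n h X p =
      ∑ p ∈ S, (-(if Admissible N D h p ∧ 0 < p.1 ∧ 0 < p.2.2.1 then mono D w n h X p else 0) +
        if Admissible N D h p ∧ 0 < p.1 ∧ p.2.2.1 < 0 then mono D w n h X p else 0) := by
    rw [Finset.sum_filter]
    refine Finset.sum_congr rfl fun p hp => ?_
    have hp := (hmem p).1 hp
    by_cases ha : 0 < p.1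
    · rcases hp.orient_eq ha with ⟨hc, ho⟩ | ⟨hc, ho⟩ <;>
        simp [hp, ha, hc, ho, hc.le]
    · simp [ha]
  have hflip : ∑ p ∈ S with ¬ 0 < p.1, orient D h p * mono D w n h X p =
      ∑ p ∈ S with 0 < p.1, orient D h p * mono D w n h X p := by
    refine Finset.sum_equiv (Equiv.neg _) (fun p => ?_) fun p _ => ?_
    · simp only [Finset.mem_filter, hmem, Equiv.neg_apply, admissible_neg, Prod.fst_neg,
        Left.neg_pos_iff]
      refine and_congr_right fun hp => ?_
      have := left_ne_zero_of_mul hp.signs.2.1.ne'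
      omega
    · rw [Equiv.neg_apply, orient_neg, mono_neg D hwe hnw]
  rw [← hhalf, ← Finset.sum_filter_add_sum_filter_not S (fun p => 0 < p.1), hflip, two_mul]

open Classical in
lemma tsum_pos_eq (N : ℕ) {D : ℕ} (hD : 0 < D) (w n : ℕ) (h : ℤ) (X : ℂ) :
    (∑' q : ℤ × ℤ × ℤ × ℤ × ℤ × ℤ,
        if q.1 * q.2.2.2.1 - q.2.1 * q.2.2.1 = 1 ∧ (N : ℤ) ∣ q.2.2.1 ∧
            0 < q.1 ∧ 0 < q.2.2.1 ∧ 0 < q.2.2.2.2.1 ∧ 0 < q.2.2.2.2.2 ∧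
            (D : ℤ) = q.2.2.2.2.1 * q.1 + q.2.2.2.2.2 * q.2.2.1 ∧
            h = -(q.2.2.2.2.1 * q.2.1) - q.2.2.2.2.2 * q.2.2.2.1 then
          ((q.1 : ℂ) * X - (q.2.2.2.2.2 : ℂ) / D) ^ n *
            ((q.2.2.1 : ℂ) * X + (q.2.2.2.2.1 : ℂ) / D) ^ (w - n)
        else 0) =
      ∑' p : ℤ × ℤ × ℤ × ℤ,
        if Admissible N D h p ∧ 0 < p.1 ∧ 0 < p.2.2.1 then mono D w n h X p else 0 := by
  let i : ℤ × ℤ × ℤ × ℤ → ℤ × ℤ × ℤ × ℤ × ℤ × ℤ := fun p =>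
    (p.1, p.2.1, p.2.2.1, p.2.2.2, p.2.2.1 * h + p.2.2.2 * D, -(p.1 * h + p.2.1 * D))
  have hi : Function.Injective i := by
    rintro ⟨a, b, c, d⟩ ⟨a', b', c', d'⟩ hq
    simp only [i, Prod.mk.injEq] at hq
    simp [hq]
  rw [← hi.tsum_eq]
  · refine tsum_congr ?_
    rintro ⟨a, b, c, d⟩
    simp only [i]
    refine if_congr ⟨?_, ?_⟩ ?_ rfl
    · rintro ⟨h1, h2, h3, h4, h5, h6, -, -⟩
      refine ⟨⟨h1, h2, ?_⟩, h3, h4⟩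
      exact mul_neg_of_neg_of_pos (mul_neg_of_pos_of_neg (mul_pos h3 h4) (neg_pos.1 h6)) h5
    · rintro ⟨hp, h3, h4⟩
      obtain ⟨s1, s2, s3⟩ := hp.signs
      refine ⟨hp.1, hp.2.1, h3, h4, pos_of_mul_pos_right s2 h3.le,
        neg_pos.2 (neg_of_mul_neg_right s3 h4.le), ?_, ?_⟩
      · linear_combination -s1
      · linear_combination -h * hp.1
    · simp only [mono, shift_eq hD]
      push_cast
      ring
  · rintro ⟨a, b, c, d, k, l⟩ hq
    simp only [Function.mem_support, ne_eq, ite_eq_right_iff, Classical.not_imp] at hq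
    obtain ⟨⟨h1, -, -, -, -, -, h7, h8⟩, -⟩ := hq
    refine ⟨(a, b, c, d), ?_⟩
    simp only [i, Prod.mk.injEq, true_and]
    constructor
    · linear_combination c * h8 + d * h7 + k * h1
    · linear_combination -a * h8 - b * h7 + l * h1

open Classical in
lemma tsum_neg_eq (N : ℕ) {D : ℕ} (hD : 0 < D) (w n : ℕ) (h : ℤ) (X : ℂ) :
    (∑' q : ℤ × ℤ × ℤ × ℤ × ℤ × ℤ,
        if q.1 * q.2.2.2.1 - q.2.1 * q.2.2.1 = 1 ∧ (N : ℤ) ∣ q.2.2.1 ∧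
            0 < q.1 ∧ q.2.2.1 < 0 ∧ 0 < q.2.2.2.2.1 ∧ 0 < q.2.2.2.2.2 ∧
            (D : ℤ) = q.2.2.2.2.1 * q.1 - q.2.2.2.2.2 * q.2.2.1 ∧
            h = -(q.2.2.2.2.1 * q.2.1) + q.2.2.2.2.2 * q.2.2.2.1 then
          ((q.1 : ℂ) * X + (q.2.2.2.2.2 : ℂ) / D) ^ n *
            ((q.2.2.1 : ℂ) * X + (q.2.2.2.2.1 : ℂ) / D) ^ (w - n)
        else 0) =
      ∑' p : ℤ × ℤ × ℤ × ℤ,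
        if Admissible N D h p ∧ 0 < p.1 ∧ p.2.2.1 < 0 then mono D w n h X p else 0 := by
  let i : ℤ × ℤ × ℤ × ℤ → ℤ × ℤ × ℤ × ℤ × ℤ × ℤ := fun p =>
    (p.1, p.2.1, p.2.2.1, p.2.2.2, p.2.2.1 * h + p.2.2.2 * D, p.1 * h + p.2.1 * D)
  have hi : Function.Injective i := by
    rintro ⟨a, b, c, d⟩ ⟨a', b', c', d'⟩ hq
    simp only [i, Prod.mk.injEq] at hq
    simp [hq]
  rw [← hi.tsum_eq]
  · refine tsum_congr ?_
    rintro ⟨a, b, c, d⟩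
    simp only [i]
    refine if_congr ⟨?_, ?_⟩ ?_ rfl
    · rintro ⟨h1, h2, h3, h4, h5, h6, -, -⟩
      refine ⟨⟨h1, h2, ?_⟩, h3, h4⟩
      exact mul_neg_of_neg_of_pos (mul_neg_of_neg_of_pos (mul_neg_of_pos_of_neg h3 h4) h6) h5
    · rintro ⟨hp, h3, h4⟩
      obtain ⟨s1, s2, s3⟩ := hp.signs
      refine ⟨hp.1, hp.2.1, h3, h4, pos_of_mul_pos_right s2 h3.le,
        pos_of_mul_neg_right s3 h4.le, ?_, ?_⟩
      · linear_combination -s1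
      · linear_combination -h * hp.1
    · simp only [mono, shift_eq hD]
      push_cast
      ring
  · rintro ⟨a, b, c, d, k, l⟩ hq
    simp only [Function.mem_support, ne_eq, ite_eq_right_iff, Classical.not_imp] at hq
    obtain ⟨⟨h1, -, -, -, -, -, h7, h8⟩, -⟩ := hq
    refine ⟨(a, b, c, d), ?_⟩
    simp only [i, Prod.mk.injEq, true_and]
    constructor
    · linear_combination c * h8 + d * h7 + k * h1
    · linear_combination a * h8 + b * h7 + l * h1

/-- the twisted period-polynomial contribution of the matrices with
`ac(ah/D+b)(ch/D+d) < 0`. -/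
theorem F5_eval (N : ℕ) (hN : 1 ≤ N) (w : ℕ) (hw : 2 ≤ w) (hwe : Even w)
    (n : ℕ) (hn0 : 0 < n) (hnw : n < w) (D : ℕ) (hD : 1 < D) (h : ℤ) (hh : 0 < h)
    (X : ℂ) :
    intI (fun z => S5 N D w n h z * (X - z) ^ w) +
      (-1 : ℂ) ^ (n - 1) * intI (fun z => S5 N D w n (-h) z * (X + z) ^ w) =
    cconst w n * (2 * Complex.I) ^ (w + 1) *
      (-(∑' q : ℤ × ℤ × ℤ × ℤ × ℤ × ℤ,
          if q.1 * q.2.2.2.1 - q.2.1 * q.2.2.1 = 1 ∧ (N : ℤ) ∣ q.2.2.1 ∧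
              0 < q.1 ∧ 0 < q.2.2.1 ∧ 0 < q.2.2.2.2.1 ∧ 0 < q.2.2.2.2.2 ∧
              (D : ℤ) = q.2.2.2.2.1 * q.1 + q.2.2.2.2.2 * q.2.2.1 ∧
              h = -(q.2.2.2.2.1 * q.2.1) - q.2.2.2.2.2 * q.2.2.2.1 then
            ((q.1 : ℂ) * X - (q.2.2.2.2.2 : ℂ) / D) ^ n *
              ((q.2.2.1 : ℂ) * X + (q.2.2.2.2.1 : ℂ) / D) ^ (w - n)
          else 0) +
        (∑' q : ℤ × ℤ × ℤ × ℤ × ℤ × ℤ,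
          if q.1 * q.2.2.2.1 - q.2.1 * q.2.2.1 = 1 ∧ (N : ℤ) ∣ q.2.2.1 ∧
              0 < q.1 ∧ q.2.2.1 < 0 ∧ 0 < q.2.2.2.2.1 ∧ 0 < q.2.2.2.2.2 ∧
              (D : ℤ) = q.2.2.2.2.1 * q.1 - q.2.2.2.2.2 * q.2.2.1 ∧
              h = -(q.2.2.2.2.1 * q.2.1) + q.2.2.2.2.2 * q.2.2.2.1 then
            ((q.1 : ℂ) * X + (q.2.2.2.2.2 : ℂ) / D) ^ n *
              ((q.2.2.1 : ℂ) * X + (q.2.2.2.2.1 : ℂ) / D) ^ (w - n)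
          else 0)) := by
  classical
  have hD0 : 0 < D := by omega
  set G : ℂ → ℂ := fun z => S5 N D w n h z * (X - z) ^ w with hG
  have hG2 : (-1 : ℂ) ^ (n - 1) * intI (fun z => S5 N D w n (-h) z * (X + z) ^ w) =
      intI fun z => G (-z) := by
    rw [intI, intI, mul_left_comm, ← integral_const_mul]
    simp only [hG, ← mul_assoc, S5_neg N hD0 hwe hn0 hnw, sub_neg_eq_add]
  have hGs : (fun s : ℝ => G (I * s)) = fun s : ℝ =>
      ∑ p ∈ (finite_admissible N hD0 h).toFinset, summand D w n h p (I * s) * (X - I * s) ^ w := by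
    ext s
    rw [hG, ← Finset.sum_mul, ← S5_eq_sum N hD0]
  have hmain (p) (hp : p ∈ (finite_admissible N hD0 h).toFinset) :=
    integral_summand hD0 hnw (w := w) (by simpa using hp : Admissible N D h p) X
  rw [hG2, intI_add_intI_neg G (by
      rw [hGs]; exact integrable_finsetSum _ fun p hp => (hmain p hp).1),
    hGs, integral_finsetSum _ fun p hp => (hmain p hp).1, Finset.mul_sum,
    Finset.sum_congr rfl fun p hp => (hmain p hp).2, tsum_pos_eq N hD0, tsum_neg_eq N hD0,
    cconst_mul]
  have hs := sum_orient_mono N hD0 hwe hnw h X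
  have hpar : (-1 : ℂ) ^ (w - n) = (-1) ^ n := by
    refine neg_one_pow_congr ?_
    simp [Nat.even_sub hnw.le, hwe]
  have hpull : ∑ p ∈ (finite_admissible N hD0 h).toFinset,
      2 * π * I * orient D h p * ((-1) ^ (w - n) * w.choose n * mono D w n h X p) =
      (-1) ^ n * (2 * π * I) * w.choose n *
        ∑ p ∈ (finite_admissible N hD0 h).toFinset, orient D h p * mono D w n h X p := by
    rw [Finset.mul_sum, hpar]
    exact Finset.sum_congr rfl fun p _ => by ring
  rw [hpull, hs]
  ring

end
end
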